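/- For every integer n ≥ 1 there exist real constants d₁, …, d_n such that M(x) = e^{(γ-1)/√e}·x^{1/√e}·(1 + d₁/log x + ⋯ + d_n/(log x)^n + O_n(1/(log x)^{n+1})) as x → ∞. -/

import Mathlib

open Filter Real MeasureTheory
open scoped Classical

/-- The largest prime factor of `n`, with the convention `P 1 = 1`. -/
noncomputable def largestPrimeFactor (n : ℕ) : ℕ :=
  if n ≤ 1 then 1 else n.primeFactors.sup id

/-- `medianLPF x` is the median largest prime factor of the integers in `[1, x]`:
the `⌈N/2⌉`-th smallest element of the multiset `{P(n) : 1 ≤ n ≤ N}` where `N = ⌊x⌋`. -/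
noncomputable def medianLPF (x : ℝ) : ℕ :=
  (((Finset.Icc 1 ⌊x⌋₊).val.map largestPrimeFactor).sort (· ≤ ·)).getD
    ((⌊x⌋₊ + 1) / 2 - 1) 0

/-- `lif x = ∫₂^x {x/t}/log t dt`. -/
noncomputable def lif (x : ℝ) : ℝ := ∫ t in (2:ℝ)..x, Int.fract (x / t) / Real.log t

namespace MLPF
open Complex in
/-- `T N s`. -/
noncomputable def T (n : ℕ) (s : ℂ) : ℂ :=
  (s - 1) * (n : ℂ) ^ (-s) + ((n + 1 : ℕ) : ℂ) ^ (1 - s) - (n : ℂ) ^ (1 - s)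

lemma cpow_sub_bound {a u : ℝ} (ha : 0 < a) (hau : a ≤ u) {s : ℂ} (hs : 0 < s.re) :
    ‖(u : ℂ) ^ (-s) - (a : ℂ) ^ (-s)‖ ≤ ‖s‖ * a ^ (-s.re - 1) * (u - a) := by
  have hs0 : s ≠ 0 := by rintro rfl; simp at hs
  have := Convex.norm_image_sub_le_of_norm_hasDerivWithin_le (𝕜 := ℝ) (G := ℂ)
    (f := fun y : ℝ => (y : ℂ) ^ (-s)) (f' := fun y : ℝ => -s * (y : ℂ) ^ (-s - 1))
    (s := Set.Ici a) (x := a) (y := u) (C := ‖s‖ * a ^ (-s.re - 1)) ?_ ?_ (convex_Ici a)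
    (by simp) (by simpa using hau)
  · rwa [Real.norm_of_nonneg (by linarith)] at this
  · intro y hy
    have hy' : a ≤ y := hy
    exact (hasDerivAt_ofReal_cpow_const (by linarith) (by simpa using hs0)).hasDerivWithinAt
  · intro y hy
    have hy' : a ≤ y := hy
    rw [norm_mul, norm_neg, Complex.norm_cpow_eq_rpow_re_of_pos (by linarith)]
    refine mul_le_mul_of_nonneg_left ?_ (norm_nonneg _)
    simp only [Complex.sub_re, Complex.neg_re, Complex.one_re]
    exact Real.rpow_le_rpow_of_nonpos ha hy' (by linarith)

lemma T_bound {n : ℕ} (hn : 1 ≤ n) {s : ℂ} (hs : 0 < s.re) :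
    ‖T n s‖ ≤ ‖s - 1‖ * ‖s‖ * (n : ℝ) ^ (-s.re - 1) := by
  have hn0 : (0 : ℝ) < n := by exact_mod_cast hn
  by_cases h1 : s = 1
  · subst h1; simp [T]
  have h1' : (1 - s) ≠ 0 := sub_ne_zero.mpr (Ne.symm h1)
  have := Convex.norm_image_sub_le_of_norm_hasDerivWithin_le (𝕜 := ℝ) (G := ℂ)
    (f := fun y : ℝ => (y : ℂ) ^ (1 - s) + (s - 1) * y * (n : ℂ) ^ (-s))
    (f' := fun y : ℝ => (1 - s) * (y : ℂ) ^ (1 - s - 1) + (s - 1) * 1 * (n : ℂ) ^ (-s))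
    (s := Set.Icc (n : ℝ) (n + 1)) (x := n) (y := n + 1)
    (C := ‖s - 1‖ * ‖s‖ * (n : ℝ) ^ (-s.re - 1)) ?_ ?_ (convex_Icc _ _)
    (by simp) (by simp)
  · simp only [add_sub_cancel_left, norm_one, mul_one] at this
    refine le_of_eq_of_le (congrArg norm ?_) this
    simp only [T]; push_cast; ring
  · intro y hy
    have : HasDerivAt (fun y : ℝ => (y : ℂ)) 1 y := Complex.ofRealCLM.hasDerivAt
    exact ((hasDerivAt_ofReal_cpow_const (by linarith [hy.1]) h1').add
      ((this.const_mul _).mul_const _)).hasDerivWithinAt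
  · intro y hy
    have e : (1 - s) * (y : ℂ) ^ (1 - s - 1) + (s - 1) * 1 * (n : ℂ) ^ (-s)
      = -((s - 1) * ((y : ℂ) ^ (-s) - ((n : ℝ) : ℂ) ^ (-s))) := by
      rw [show 1 - s - 1 = -s by ring]; push_cast; ring
    rw [e, norm_neg, norm_mul, mul_assoc]
    refine mul_le_mul_of_nonneg_left ?_ (norm_nonneg _)
    refine (cpow_sub_bound hn0 hy.1 hs).trans ?_
    have h3 : 0 ≤ ‖s‖ * (n : ℝ) ^ (-s.re - 1) := by positivity
    nlinarith [hy.2]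

/-- the entire function `(s-1)ζ(s)`. -/
noncomputable def Z : ℂ → ℂ := Function.update (fun s ↦ (s - 1) * riemannZeta s) 1 1

lemma Z_of_ne {s : ℂ} (hs : s ≠ 1) : Z s = (s - 1) * riemannZeta s := by
  simp [Z, hs]

lemma Z_one : Z 1 = 1 := by simp [Z]

lemma Z_diff : Differentiable ℂ Z := by
  have h1 : ∀ s : ℂ, s ≠ 1 → DifferentiableAt ℂ Z s := by
    intro s hs
    have : (fun s ↦ (s - 1) * riemannZeta s) =ᶠ[nhds s] Z := by
      filter_upwards [isOpen_ne.mem_nhds hs] with z hz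
      rw [Z_of_ne hz]
    exact (((differentiableAt_id.sub_const 1).mul
      (differentiableAt_riemannZeta hs)).congr_of_eventuallyEq this.symm)
  intro s
  by_cases hs : s = 1
  · subst hs
    refine (Complex.analyticAt_of_differentiable_on_punctured_nhds_of_continuousAt ?_ ?_).differentiableAt
    · filter_upwards [self_mem_nhdsWithin] with z hz
      exact h1 z hz
    · simpa only [Z, continuousAt_update_same] using riemannZeta_residue_one
  · exact h1 s hs

lemma T_diff (n : ℕ) (hn : 1 ≤ n) : Differentiable ℂ (T n) := by
  have h1 : ((n + 1 : ℕ) : ℂ) ≠ 0 := by exact_mod_cast Nat.succ_ne_zero n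
  have h2 : (n : ℂ) ≠ 0 := by exact_mod_cast (by omega : n ≠ 0)
  intro s
  unfold T
  refine (((differentiableAt_id.sub_const 1).mul ?_).add ?_).sub ?_
  · exact (differentiableAt_id.neg).const_cpow (Or.inl h2)
  · exact (differentiableAt_id.const_sub 1).const_cpow (Or.inl h1)
  · exact (differentiableAt_id.const_sub 1).const_cpow (Or.inl h2)

lemma T_summable_rpow {N : ℕ} {a : ℝ} (ha : 0 < a) :
    Summable (fun n : ℕ => ((n + N : ℕ) : ℝ) ^ (-a - 1)) := by
  exact (summable_nat_add_iff (f := fun n : ℕ => (n : ℝ) ^ (-a - 1)) N).mpr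
    (Real.summable_nat_rpow.mpr (by linarith))

lemma T_summable {N : ℕ} (hN : 1 ≤ N) {s : ℂ} (hs : 0 < s.re) :
    Summable (fun n : ℕ => T (n + N) s) := by
  refine Summable.of_norm_bounded ((T_summable_rpow (N := N) hs).mul_left (‖s - 1‖ * ‖s‖)) ?_
  intro n
  exact T_bound (by omega) hs

/-- Right side. -/
noncomputable def ZN (N : ℕ) (s : ℂ) : ℂ :=
  (s - 1) * ∑ n ∈ Finset.Ico 1 N, (n : ℂ) ^ (-s) + (N : ℂ) ^ (1 - s) + ∑' n : ℕ, T (n + N) s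

lemma ZN_diffAt {N : ℕ} (hN : 1 ≤ N) {s : ℂ} (hs : 0 < s.re) : DifferentiableAt ℂ (ZN N) s := by
  have h2 : ∀ n : ℕ, 1 ≤ n → (n : ℂ) ≠ 0 := fun n hn => by exact_mod_cast (by omega : n ≠ 0)
  refine (((differentiableAt_id.sub_const 1).mul ?_).add ?_).add ?_
  · refine DifferentiableAt.fun_sum ?_
    intro n hn
    exact (differentiableAt_id.neg).const_cpow (Or.inl (h2 n (Finset.mem_Ico.mp hn).1))
  · exact (differentiableAt_id.const_sub 1).const_cpow (Or.inl (h2 N hN))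
  · let U : Set ℂ := {z | s.re / 2 < z.re} ∩ Metric.ball 0 (‖s‖ + 1)
    have hU : IsOpen U := (isOpen_lt continuous_const Complex.continuous_re).inter Metric.isOpen_ball
    have hsU : s ∈ U := ⟨by show s.re / 2 < s.re; linarith, by simp⟩
    refine (Complex.differentiableOn_tsum_of_summable_norm (U := U)
      (u := fun n => ((‖s‖ + 2) * (‖s‖ + 1)) * ((n + N : ℕ) : ℝ) ^ (-(s.re / 2) - 1))
      ((T_summable_rpow (by linarith)).mul_left _)
      (fun n => (T_diff _ (by omega)).differentiableOn) hU ?_).differentiableAt (hU.mem_nhds hsU)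
    intro n w hw
    have hw1 : s.re / 2 < w.re := hw.1
    have hw2 : ‖w‖ < ‖s‖ + 1 := by simpa using hw.2
    have hw3 : ‖w - 1‖ ≤ ‖s‖ + 2 := (norm_sub_le _ _).trans (by simp; linarith)
    refine (T_bound (by omega) (by linarith)).trans ?_
    have h5 : (1 : ℝ) ≤ ((n + N : ℕ) : ℝ) := by exact_mod_cast (by omega : 1 ≤ n + N)
    have : ((n + N : ℕ) : ℝ) ^ (-w.re - 1) ≤ ((n + N : ℕ) : ℝ) ^ (-(s.re / 2) - 1) :=
      Real.rpow_le_rpow_of_exponent_le h5 (by linarith)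
    gcongr

lemma Z_eq_of_one_lt {N : ℕ} (hN : 1 ≤ N) {s : ℂ} (hs : 1 < s.re) : Z s = ZN N s := by
  have hs1 : s ≠ 1 := by rintro rfl; simp at hs
  rw [Z_of_ne hs1, zeta_eq_tsum_one_div_nat_cpow hs]
  have hsum : Summable (fun n : ℕ => 1 / (n : ℂ) ^ s) := Complex.summable_one_div_nat_cpow.mpr hs
  have hs0 : s ≠ 0 := by rintro rfl; simp at hs; linarith
  have e1 : ∑' n : ℕ, 1 / (n : ℂ) ^ s = ∑ n ∈ Finset.Ico 1 N, (n : ℂ) ^ (-s)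
      + ∑' n : ℕ, ((n + N : ℕ) : ℂ) ^ (-s) := by
    rw [← hsum.sum_add_tsum_nat_add N, Finset.range_eq_Ico, Finset.sum_eq_sum_Ico_succ_bot (by omega)]
    simp [Complex.zero_cpow hs0, Complex.cpow_neg]
  have hsum' : Summable (fun n : ℕ => ((n + N : ℕ) : ℂ) ^ (-s)) := by
    have := (summable_nat_add_iff N).mpr hsum
    simpa [Complex.cpow_neg] using this
  have e2 : HasSum (fun n : ℕ => T (n + N) s)
      ((s - 1) * ∑' n : ℕ, ((n + N : ℕ) : ℂ) ^ (-s) + (0 - (N : ℂ) ^ (1 - s))) := by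
    have hT := T_summable hN (s := s) (by linarith)
    have t1 := hT.hasSum.tendsto_sum_nat
    have t2 := (hsum'.hasSum.tendsto_sum_nat).const_mul (s - 1)
    have t3 : Tendsto (fun M : ℕ => ((M + N : ℕ) : ℂ) ^ (1 - s)) atTop (nhds 0) := by
      rw [tendsto_zero_iff_norm_tendsto_zero]
      have : Tendsto (fun M : ℕ => ((M + N : ℕ) : ℝ) ^ (-(s.re - 1))) atTop (nhds 0) :=
        (tendsto_rpow_neg_atTop (by linarith)).comp
          (tendsto_natCast_atTop_atTop.comp (tendsto_add_atTop_nat N))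
      refine this.congr ?_
      intro M
      rw [Complex.norm_natCast_cpow_of_pos (by omega)]
      simp
    have t4 := t2.add (t3.sub_const ((N : ℂ) ^ (1 - s)))
    have : (fun M : ℕ => ∑ n ∈ Finset.range M, T (n + N) s) = fun M : ℕ =>
        (s - 1) * ∑ n ∈ Finset.range M, ((n + N : ℕ) : ℂ) ^ (-s)
          + (((M + N : ℕ) : ℂ) ^ (1 - s) - (N : ℂ) ^ (1 - s)) := by
      funext M
      induction M with
      | zero => simp
      | succ M ih =>
        rw [Finset.sum_range_succ, ih, Finset.sum_range_succ]
        simp only [T]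
        rw [show M + 1 + N = M + N + 1 by ring]
        ring
    rw [this] at t1
    rw [← tendsto_nhds_unique t1 t4]
    exact hT.hasSum
  rw [ZN, e2.tsum_eq, e1]
  ring

lemma Z_eq {N : ℕ} (hN : 1 ≤ N) {s : ℂ} (hs : 0 < s.re) : Z s = ZN N s := by
  have hopen : IsOpen {z : ℂ | 0 < z.re} := isOpen_lt continuous_const Complex.continuous_re
  have hopen1 : IsOpen {z : ℂ | 1 < z.re} := isOpen_lt continuous_const Complex.continuous_re
  refine AnalyticOnNhd.eqOn_of_preconnected_of_eventuallyEq (𝕜 := ℂ) (U := {z : ℂ | 0 < z.re}) (z₀ := 2)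
    (f := Z) (g := ZN N) ?_ ?_ ?_ (by simp) ?_ hs
  · exact Z_diff.differentiableOn.analyticOnNhd hopen
  · exact DifferentiableOn.analyticOnNhd
      (fun z hz => (ZN_diffAt hN hz).differentiableWithinAt) hopen
  · exact (convex_halfSpace_re_gt 0).isPreconnected
  · filter_upwards [hopen1.mem_nhds (by simp : (2 : ℂ) ∈ {z : ℂ | 1 < z.re})] with z hz
    exact Z_eq_of_one_lt hN hz

end MLPF

namespace MLPF
/-- the log size. -/
noncomputable def LL (t : ℝ) : ℝ := Real.log (|t| + 10)

lemma LL_ge (t : ℝ) : 2 ≤ LL t := by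
  have : Real.exp 2 ≤ |t| + 10 := by
    have h1 := Real.exp_one_lt_d9
    have h2 : Real.exp 2 = Real.exp 1 * Real.exp 1 := by rw [← Real.exp_add]; norm_num
    nlinarith [Real.exp_pos 1, abs_nonneg t]
  exact (Real.le_log_iff_exp_le (by positivity)).mpr this

lemma LL_le_two {t t' : ℝ} (h : |t'| ≤ 2 * |t| + 5) : LL t' ≤ 2 * LL t := by
  unfold LL
  rw [show 2 * Real.log (|t| + 10) = Real.log ((|t| + 10) ^ 2) by rw [Real.log_pow]; norm_num]
  exact Real.log_le_log (by positivity) (by nlinarith [abs_nonneg t])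

lemma rpow_le_e {n τ σ : ℝ} (hn : 1 ≤ n) (hnτ : n ≤ τ) (hτ : 1 < τ)
    (hσ : 1 - 1 / Real.log τ ≤ σ) : n ^ (1 - σ) ≤ Real.exp 1 := by
  have hL : 0 < Real.log τ := Real.log_pos hτ
  calc n ^ (1 - σ) ≤ n ^ (1 / Real.log τ) :=
        Real.rpow_le_rpow_of_exponent_le hn (by linarith)
    _ ≤ τ ^ (1 / Real.log τ) := Real.rpow_le_rpow (by linarith) hnτ (by positivity)
    _ = Real.exp 1 := by
        rw [Real.rpow_def_of_pos (by linarith), mul_one_div_cancel hL.ne']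

lemma tail_step {n : ℝ} (hn : 1 < n) {σ : ℝ} (hσ : 0 < σ) :
    σ * n ^ (-σ - 1) ≤ (n - 1) ^ (-σ) - n ^ (-σ) := by
  have h0 : 0 < n := by linarith
  have h1 : 0 < n - 1 := by linarith
  have e1 : (n - 1) ^ (-σ) = n ^ (-σ) * (1 - 1 / n) ^ (-σ) := by
    rw [← Real.mul_rpow h0.le (by rw [sub_nonneg, div_le_one h0]; exact hn.le)]
    congr 1; field_simp
  have h2 : 0 < 1 - 1 / n := by rw [sub_pos, div_lt_one h0]; exact hn
  have e2 : 1 + σ / n ≤ (1 - 1 / n) ^ (-σ) := by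
    rw [Real.rpow_def_of_pos h2]
    have h3 := Real.log_le_sub_one_of_pos h2
    have h4 := Real.add_one_le_exp (Real.log (1 - 1 / n) * -σ)
    have : σ / n = σ * (1 / n) := by ring
    nlinarith
  have e3 : n ^ (-σ - 1) = n ^ (-σ) / n := by rw [Real.rpow_sub h0, Real.rpow_one]
  rw [e1, e3]
  have h5 : 0 < n ^ (-σ) := Real.rpow_pos_of_pos h0 _
  have : σ * (n ^ (-σ) / n) = n ^ (-σ) * (σ / n) := by ring
  nlinarith

lemma tail_sum {N : ℕ} (hN : 2 ≤ N) {σ : ℝ} (hσ : 0 < σ) :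
    ∑' n : ℕ, ((n + N : ℕ) : ℝ) ^ (-σ - 1) ≤ ((N : ℝ) - 1) ^ (-σ) / σ := by
  have hN' : (2 : ℝ) ≤ N := by exact_mod_cast hN
  refine Real.tsum_le_of_sum_range_le (fun n => by positivity) ?_
  intro M
  have : ∑ n ∈ Finset.range M, ((n + N : ℕ) : ℝ) ^ (-σ - 1) ≤
      (((N : ℝ) - 1) ^ (-σ) - ((M : ℝ) + N - 1) ^ (-σ)) / σ := by
    induction M with
    | zero => simp
    | succ M ih =>
      rw [Finset.sum_range_succ]
      have h := tail_step (n := (M : ℝ) + N) (by have : (0 : ℝ) ≤ M := by positivity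
                                                 linarith) hσ
      have h2 : ((M : ℝ) + N) ^ (-σ - 1) ≤
        (((M : ℝ) + N - 1) ^ (-σ) - ((M : ℝ) + N) ^ (-σ)) / σ := by
        rw [le_div_iff₀ hσ]; linarith
      push_cast
      rw [show (M : ℝ) + 1 + N - 1 = M + N by ring]
      push_cast at ih
      have e : (((N : ℝ) - 1) ^ (-σ) - ((M : ℝ) + N) ^ (-σ)) / σ =
        (((N : ℝ) - 1) ^ (-σ) - ((M : ℝ) + N - 1) ^ (-σ)) / σ +
        (((M : ℝ) + N - 1) ^ (-σ) - ((M : ℝ) + N) ^ (-σ)) / σ := by ring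
      linarith
  refine this.trans ?_
  have h0 : 0 ≤ ((M : ℝ) + N - 1) ^ (-σ) := by
    apply Real.rpow_nonneg
    have : (0 : ℝ) ≤ M := by positivity
    linarith
  gcongr
  linarith

lemma zeta_bound : ∃ C : ℝ, 0 < C ∧ ∀ s : ℂ, 1 ≤ |s.im| → 1 - 1 / LL s.im ≤ s.re → s.re ≤ 3 →
    ‖riemannZeta s‖ ≤ C * LL s.im := by
  refine ⟨7 * Real.exp 1, by positivity, ?_⟩
  intro s ht hσ hσ3
  have hL := LL_ge s.im
  set τ : ℝ := |s.im| + 10 with hτ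
  have hLτ : LL s.im = Real.log τ := rfl
  rw [hLτ] at hσ hL ⊢
  set N : ℕ := ⌊τ⌋₊ with hNdef
  have hτ11 : 11 ≤ τ := by linarith
  have hNle : (N : ℝ) ≤ τ := Nat.floor_le (by linarith)
  have hNgt : τ < N + 1 := Nat.lt_floor_add_one τ
  have hN10 : (10 : ℝ) < N := by linarith
  have hN2 : 2 ≤ N := by
    have : (2 : ℝ) ≤ N := by linarith
    exact_mod_cast this
  have hσ2 : 1 / 2 ≤ s.re := by
    have : 1 / Real.log τ ≤ 1 / 2 := one_div_le_one_div_of_le (by norm_num) hL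
    linarith
  have hs1 : s ≠ 1 := by rintro rfl; simp at ht; linarith
  have hsn : 1 ≤ ‖s - 1‖ := by
    have := Complex.abs_im_le_norm (s - 1)
    simp at this; linarith
  have hsτ : ‖s‖ ≤ τ := by
    have := Complex.norm_le_abs_re_add_abs_im s
    rw [abs_of_nonneg (by linarith : 0 ≤ s.re)] at this
    linarith
  have key := Z_eq (N := N) (by omega) (s := s) (by linarith)
  rw [Z_of_ne hs1] at key
  have he : 0 < Real.exp 1 := Real.exp_pos 1
  -- head
  have b1 : ‖∑ n ∈ Finset.Ico 1 N, (n : ℂ) ^ (-s)‖ ≤ Real.exp 1 * (1 + Real.log τ) := by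
    have h1 : ‖∑ n ∈ Finset.Ico 1 N, (n : ℂ) ^ (-s)‖ ≤
        ∑ n ∈ Finset.Ico 1 N, Real.exp 1 * (n : ℝ)⁻¹ := by
      refine norm_sum_le_of_le _ ?_
      intro n hn
      have hn1 : 1 ≤ n := (Finset.mem_Ico.mp hn).1
      have hn2 : n ≤ N := (Finset.mem_Ico.mp hn).2.le
      have hn1' : (1 : ℝ) ≤ n := by exact_mod_cast hn1
      have hn2' : (n : ℝ) ≤ N := by exact_mod_cast hn2
      rw [Complex.norm_natCast_cpow_of_pos (by omega)]
      have h2 := rpow_le_e hn1' (hn2'.trans hNle) (by linarith) hσ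
      have e : (n : ℝ) ^ (-s).re = (n : ℝ) ^ (1 - s.re) * (n : ℝ)⁻¹ := by
        rw [← Real.rpow_neg_one (n : ℝ), ← Real.rpow_add (by linarith), Complex.neg_re]
        congr 1; ring
      rw [e]
      gcongr
    have h3 : ∑ n ∈ Finset.Ico 1 N, (n : ℝ)⁻¹ ≤ 1 + Real.log τ := by
      have h4 := harmonic_le_one_add_log N
      have h5 : ∑ n ∈ Finset.Ico 1 N, (n : ℝ)⁻¹ ≤ (harmonic N : ℝ) := by
        rw [harmonic_eq_sum_Icc]
        push_cast
        refine Finset.sum_le_sum_of_subset_of_nonneg ?_ (fun _ _ _ => by positivity)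
        intro a ha
        simp only [Finset.mem_Ico, Finset.mem_Icc] at *
        omega
      have h6 : Real.log N ≤ Real.log τ := Real.log_le_log (by linarith) hNle
      linarith
    rw [← Finset.mul_sum] at h1
    exact h1.trans (by gcongr)
  have b2 : ‖(N : ℂ) ^ (1 - s)‖ ≤ Real.exp 1 := by
    rw [Complex.norm_natCast_cpow_of_pos (by omega)]
    have := rpow_le_e (n := N) (by linarith) hNle (by linarith) hσ
    simpa using this
  have b3 : ‖∑' n : ℕ, T (n + N) s‖ ≤ ‖s - 1‖ * (4 * Real.exp 1) := by
    have hs0 : 0 < s.re := by linarith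
    have h1 : ‖∑' n : ℕ, T (n + N) s‖ ≤
        ∑' n : ℕ, ‖s - 1‖ * ‖s‖ * ((n + N : ℕ) : ℝ) ^ (-s.re - 1) := by
      refine tsum_of_norm_bounded ((T_summable_rpow hs0).mul_left _).hasSum ?_
      intro n
      exact T_bound (by omega) hs0
    rw [tsum_mul_left] at h1
    have h2 := tail_sum hN2 hs0
    have h3 := rpow_le_e (n := (N : ℝ) - 1) (by linarith) (by linarith) (by linarith) hσ
    have h4 : ((N : ℝ) - 1) ^ (-s.re) = ((N : ℝ) - 1) ^ (1 - s.re) / ((N : ℝ) - 1) := by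
      rw [← Real.rpow_sub_one (by linarith)]; congr 1; ring
    have h5 : ((N : ℝ) - 1) ^ (-s.re) / s.re ≤ 4 * Real.exp 1 / τ := by
      rw [h4, div_div, div_le_div_iff₀ (by nlinarith) (by linarith)]
      have h6 : τ ≤ 4 * (((N : ℝ) - 1) * s.re) := by nlinarith
      have h7 : 0 ≤ ((N : ℝ) - 1) ^ (1 - s.re) := Real.rpow_nonneg (by linarith) _
      calc ((N : ℝ) - 1) ^ (1 - s.re) * τ ≤ Real.exp 1 * τ := by gcongr
        _ ≤ Real.exp 1 * (4 * (((N : ℝ) - 1) * s.re)) := by gcongr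
        _ = _ := by ring
    calc _ ≤ _ := h1
      _ ≤ ‖s - 1‖ * τ * (4 * Real.exp 1 / τ) := by
          gcongr; exact h2.trans h5
      _ = _ := by field_simp
  have hfin : ‖s - 1‖ * ‖riemannZeta s‖ ≤ ‖s - 1‖ * (7 * Real.exp 1 * Real.log τ) := by
    rw [← norm_mul, key, ZN]
    refine (norm_add₃_le).trans ?_
    rw [norm_mul]
    have c1 : ‖s - 1‖ * ‖∑ n ∈ Finset.Ico 1 N, (n : ℂ) ^ (-s)‖ ≤
      ‖s - 1‖ * (Real.exp 1 * (1 + Real.log τ)) := by gcongr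
    have c2 : Real.exp 1 ≤ ‖s - 1‖ * Real.exp 1 := by nlinarith
    have c3 : ‖s - 1‖ * (Real.exp 1 * (6 + Real.log τ)) ≤
        ‖s - 1‖ * (7 * Real.exp 1 * Real.log τ) := by
      apply mul_le_mul_of_nonneg_left _ (by linarith)
      nlinarith
    nlinarith
  exact le_of_mul_le_mul_left hfin (by linarith)

lemma zeta_deriv_bound : ∃ D : ℝ, 0 < D ∧ ∀ s : ℂ, 2 ≤ |s.im| → 1 - 1 / (4 * LL s.im) ≤ s.re →
    s.re ≤ 2 → ‖deriv riemannZeta s‖ ≤ D * LL s.im ^ 2 := by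
  obtain ⟨C, hC, h⟩ := zeta_bound
  refine ⟨8 * C, by positivity, ?_⟩
  intro s ht hσ hσ2
  have hL := LL_ge s.im
  have hr : 0 < 1 / (4 * LL s.im) := by positivity
  have hr1 : 1 / (4 * LL s.im) ≤ 1 / 8 := one_div_le_one_div_of_le (by norm_num) (by linarith)
  have him : ∀ z : ℂ, ‖z - s‖ ≤ 1 / (4 * LL s.im) →
      |z.im - s.im| ≤ 1 / (4 * LL s.im) ∧ |z.re - s.re| ≤ 1 / (4 * LL s.im) := by
    intro z hz
    exact ⟨by simpa using (Complex.abs_im_le_norm (z - s)).trans hz,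
      by simpa using (Complex.abs_re_le_norm (z - s)).trans hz⟩
  have hne : ∀ z : ℂ, ‖z - s‖ ≤ 1 / (4 * LL s.im) → 1 ≤ |z.im| ∧ |z.im| ≤ |s.im| + 1 := by
    intro z hz
    have h1 := (him z hz).1
    have h2 := abs_sub_abs_le_abs_sub s.im z.im
    have h3 := abs_sub_abs_le_abs_sub z.im s.im
    rw [abs_sub_comm] at h2
    constructor <;> linarith
  have := Complex.norm_deriv_le_of_forall_mem_sphere_norm_le (f := riemannZeta) (c := s)
    (R := 1 / (4 * LL s.im)) (C := 2 * C * LL s.im) hr ?_ ?_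
  · refine this.trans (le_of_eq ?_)
    field_simp; ring
  · refine DifferentiableOn.diffContOnCl ?_
    rw [closure_ball _ hr.ne']
    intro z hz
    refine (differentiableAt_riemannZeta ?_).differentiableWithinAt
    rintro rfl
    have := (hne 1 (by simpa [dist_eq_norm] using hz)).1
    simp at this; linarith
  · intro z hz
    have hz' : ‖z - s‖ ≤ 1 / (4 * LL s.im) := by
      have : ‖z - s‖ = 1 / (4 * LL s.im) := by simpa [dist_eq_norm] using hz
      exact this.le
    have h1 := hne z hz'
    have h2 := him z hz'
    have hL2 : LL z.im ≤ 2 * LL s.im := LL_le_two (by linarith [abs_nonneg s.im])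
    have hLz := LL_ge z.im
    have h3 : 1 / (2 * LL s.im) ≤ 1 / LL z.im := one_div_le_one_div_of_le (by linarith) hL2
    have h4 : 1 / (2 * LL s.im) = 2 * (1 / (4 * LL s.im)) := by field_simp; norm_num
    have h5 := abs_le.mp h2.2
    refine (h z h1.1 (by linarith) (by linarith)).trans ?_
    nlinarith
end MLPF

namespace MLPF

lemma zeta_341 : ∃ c : ℝ, 0 < c ∧ ∀ x t : ℝ, 0 < x → x ≤ 1 → 2 ≤ |t| →
    c * x ^ 3 / LL t ≤ ‖riemannZeta (1 + x + Complex.I * t)‖ ^ 4 := by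
  obtain ⟨C, hC, hz⟩ := zeta_bound
  obtain ⟨K, hK⟩ := ((isCompact_Icc (a := (0 : ℝ)) (b := 1)).exists_bound_of_continuousOn
    (f := fun x : ℝ => Z (1 + x))
    (Z_diff.continuous.comp (by fun_prop : Continuous fun x : ℝ => (1 + (x : ℂ)))).continuousOn)
  have hK0 : 0 ≤ K := (norm_nonneg _).trans (hK 0 (by simp))
  refine ⟨1 / ((K + 1) ^ 3 * (2 * C)), by positivity, ?_⟩
  intro x t hx hx1 ht
  have h := DirichletCharacter.norm_LFunction_product_ge_one (N := 1) 1 hx t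
  simp only [DirichletCharacter.LFunctionTrivChar, DirichletCharacter.LFunction_modOne_eq] at h
  rw [norm_mul, norm_mul, norm_pow, norm_pow] at h
  have h1 : ‖riemannZeta (1 + x)‖ ≤ (K + 1) / x := by
    have hx' : (1 + (x : ℂ)) ≠ 1 := by simpa using hx.ne'
    have := hK x ⟨hx.le, hx1⟩
    rw [Z_of_ne hx'] at this
    simp only [add_sub_cancel_left, norm_mul, Complex.norm_real, Real.norm_of_nonneg hx.le] at this
    rw [le_div_iff₀ hx]; linarith
  have hL := LL_ge t
  have h2 : ‖riemannZeta (1 + x + 2 * Complex.I * t)‖ ≤ 2 * C * LL t := by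
    have e1 : (1 + x + 2 * Complex.I * t : ℂ).im = 2 * t := by simp
    have e2 : (1 + x + 2 * Complex.I * t : ℂ).re = 1 + x := by simp
    have h3 := hz (1 + x + 2 * Complex.I * t) (by rw [e1, abs_mul]; norm_num; linarith)
      (by rw [e2]; have : 0 ≤ 1 / LL (1 + x + 2 * Complex.I * t : ℂ).im := by
            have := LL_ge (1 + x + 2 * Complex.I * t : ℂ).im
            positivity
          linarith) (by rw [e2]; linarith)
    rw [e1] at h3
    have : LL (2 * t) ≤ 2 * LL t := LL_le_two (by rw [abs_mul]; norm_num)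
    nlinarith
  set a := ‖riemannZeta (1 + x + Complex.I * t)‖ ^ 4 with ha
  have ha0 : 0 ≤ a := by positivity
  have h4 : 1 ≤ ((K + 1) / x) ^ 3 * a * (2 * C * LL t) := by
    refine le_trans h ?_
    gcongr
  rw [div_mul_eq_mul_div, one_mul, div_div, div_le_iff₀ (by positivity)]
  have e : ((K + 1) / x) ^ 3 * a * (2 * C * LL t) = (a * ((K + 1) ^ 3 * (2 * C) * LL t)) / x ^ 3 := by
    field_simp
  rw [e, le_div_iff₀ (by positivity)] at h4
  linarith

lemma zeta_lower : ∃ κ c : ℝ, 0 < κ ∧ κ ≤ 1 ∧ 0 < c ∧ ∀ s : ℂ, 2 ≤ |s.im| →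
    1 - κ / LL s.im ^ 9 ≤ s.re → s.re ≤ 2 → c / LL s.im ^ 7 ≤ ‖riemannZeta s‖ := by
  obtain ⟨c, hc, h341⟩ := zeta_341
  obtain ⟨D, hD, hder⟩ := zeta_deriv_bound
  obtain ⟨κ, hκ0, hκ1, hκ⟩ : ∃ κ : ℝ, 0 < κ ∧ κ ≤ 1 ∧ (3 * D) ^ 4 * κ ≤ c := by
    refine ⟨min 1 (c / (3 * D) ^ 4), by positivity, min_le_left _ _, ?_⟩
    calc (3 * D) ^ 4 * min 1 (c / (3 * D) ^ 4) ≤ (3 * D) ^ 4 * (c / (3 * D) ^ 4) := by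
          gcongr; exact min_le_right _ _
      _ = c := by field_simp
  refine ⟨κ, D * κ, hκ0, hκ1, by positivity, ?_⟩
  intro s ht hσ hσ2
  have hL := LL_ge s.im
  set L := LL s.im with hLdef
  set η := κ / L ^ 9 with hη
  have hη0 : 0 < η := by positivity
  have hη1 : η ≤ 1 / (4 * L) := by
    rw [hη, div_le_div_iff₀ (by positivity) (by positivity)]
    have : (4 : ℝ) ≤ L ^ 8 := by
      calc (4 : ℝ) ≤ 2 ^ 8 := by norm_num
        _ ≤ L ^ 8 := by gcongr
    have h9 : L ^ 9 = L ^ 8 * L := by ring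
    rw [h9]
    nlinarith
  have hη2 : η ≤ 1 := by
    have : 1 / (4 * L) ≤ 1 := by rw [div_le_one (by positivity)]; linarith
    linarith
  -- bound to the right
  have right : ∀ x : ℝ, η ≤ x → x ≤ 1 →
      3 * D * κ / L ^ 7 ≤ ‖riemannZeta (1 + x + Complex.I * s.im)‖ := by
    intro x hx hx1
    have h := h341 x s.im (by linarith) hx1 ht
    refine le_of_pow_le_pow_left₀ (n := 4) (by norm_num) (norm_nonneg _) (le_trans ?_ h)
    have h5 : c * η ^ 3 / L ≤ c * x ^ 3 / L := by gcongr
    refine le_trans ?_ h5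
    have e1 : c * η ^ 3 / L = c * κ ^ 3 / L ^ 28 := by rw [hη]; field_simp
    have e2 : (3 * D * κ / L ^ 7) ^ 4 = ((3 * D) ^ 4 * κ) * κ ^ 3 / L ^ 28 := by field_simp
    rw [e1, e2]
    gcongr
  have hsre : ∀ s : ℂ, (1 : ℂ) + ((s.re - 1 : ℝ) : ℂ) + Complex.I * s.im = s := by
    intro s
    apply Complex.ext <;> simp
  rcases le_total (1 + η) s.re with hcase | hcase
  · have := right (s.re - 1) (by linarith) (by linarith)
    rw [hsre] at this
    refine le_trans ?_ this
    gcongr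
    linarith
  · have h1 := right η le_rfl hη2
    set w : ℂ := 1 + η + Complex.I * s.im with hw
    have hwre : w.re = 1 + η := by simp [hw]
    have hwim : w.im = s.im := by simp [hw]
    let S : Set ℂ := {z | 1 - η ≤ z.re ∧ z.re ≤ 1 + η} ∩ {z | z.im = s.im}
    have hconv : Convex ℝ S := by
      refine ((convex_halfSpace_re_ge _).inter (convex_halfSpace_re_le _)).inter ?_
      exact convex_hyperplane (f := Complex.im) ⟨by simp, by simp⟩ _
    have h2 := Convex.norm_image_sub_le_of_norm_deriv_le (𝕜 := ℂ) (f := riemannZeta) (s := S)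
      (x := s) (y := w) (C := D * L ^ 2) ?_ ?_ hconv ⟨⟨by linarith, hcase⟩, rfl⟩
      ⟨⟨by linarith, by linarith⟩, hwim⟩
    · have h3 : ‖w - s‖ ≤ 2 * η := by
        have : w - s = ((1 + η - s.re : ℝ) : ℂ) := by
          apply Complex.ext <;> simp [hw]
        rw [this, Complex.norm_real, Real.norm_of_nonneg (by linarith)]
        linarith
      have h4 : ‖riemannZeta w - riemannZeta s‖ ≤ 2 * (D * κ / L ^ 7) := by
        refine h2.trans ?_
        calc D * L ^ 2 * ‖w - s‖ ≤ D * L ^ 2 * (2 * η) := by gcongr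
          _ = 2 * (D * κ / L ^ 7) := by rw [hη]; field_simp
      have h5 := norm_sub_norm_le (riemannZeta w) (riemannZeta s)
      have h6 : 3 * D * κ / L ^ 7 = 3 * (D * κ / L ^ 7) := by ring
      linarith
    · intro z hz
      refine differentiableAt_riemannZeta ?_
      rintro rfl
      have : (1 : ℂ).im = s.im := hz.2
      simp at this
      rw [← this] at ht; simp at ht; linarith
    · intro z hz
      have hzim : z.im = s.im := hz.2
      have := hder z (by rw [hzim]; exact ht) (by rw [hzim]; have := hz.1.1; linarith)
        (by have := hz.1.2; linarith)
      rwa [hzim] at this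

/-- The regularised `-ζ'/ζ - ζ`. -/
noncomputable def FF (s : ℂ) : ℂ := -deriv Z s / Z s - dslope Z 1 s

lemma FF_eq {s : ℂ} (hs : s ≠ 1) (hz : riemannZeta s ≠ 0) :
    FF s = -deriv riemannZeta s / riemannZeta s - riemannZeta s := by
  have hs' : s - 1 ≠ 0 := sub_ne_zero.mpr hs
  have hd : deriv Z s = riemannZeta s + (s - 1) * deriv riemannZeta s := by
    have : Z =ᶠ[nhds s] (fun s ↦ (s - 1) * riemannZeta s) := by
      filter_upwards [isOpen_ne.mem_nhds hs] with z hz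
      rw [Z_of_ne hz]
    rw [this.deriv_eq]
    have h1 := ((hasDerivAt_id s).sub_const 1).mul (differentiableAt_riemannZeta hs).hasDerivAt
    refine (show deriv (fun s ↦ (s - 1) * riemannZeta s) s = _ from h1.deriv).trans ?_
    simp
  rw [FF, hd, dslope_of_ne _ hs, slope_def_field, Z_of_ne hs, Z_one]
  field_simp
  ring

lemma Z_ne_zero {s : ℂ} (hs : 1 ≤ s.re) : Z s ≠ 0 := by
  by_cases h : s = 1
  · rw [h, Z_one]; exact one_ne_zero
  · rw [Z_of_ne h]
    exact mul_ne_zero (sub_ne_zero.mpr h) (riemannZeta_ne_zero_of_one_le_re hs)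

lemma FF_diffAt {s : ℂ} (hs : Z s ≠ 0) : DifferentiableAt ℂ FF s := by
  have h1 : Differentiable ℂ (dslope Z 1) := by
    rw [← differentiableOn_univ, Complex.differentiableOn_dslope univ_mem]
    exact Z_diff.differentiableOn
  have h2 : Differentiable ℂ (deriv Z) := by
    have := Z_diff.contDiff (n := 2)
    exact (this.differentiable_deriv_two)
  exact ((h2 s).neg.div (Z_diff s) hs).sub (h1 s)

lemma FF_bound : ∃ κ C : ℝ, 0 < κ ∧ κ ≤ 1 ∧ 0 < C ∧ ∀ s : ℂ, 2 ≤ |s.im| →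
    1 - κ / LL s.im ^ 9 ≤ s.re → s.re ≤ 2 → Z s ≠ 0 ∧ ‖FF s‖ ≤ C * LL s.im ^ 9 := by
  obtain ⟨C, hC, hz⟩ := zeta_bound
  obtain ⟨D, hD, hder⟩ := zeta_deriv_bound
  obtain ⟨κ, c, hκ, hκ1, hc, hlow⟩ := zeta_lower
  refine ⟨κ, D / c + C, hκ, hκ1, by positivity, ?_⟩
  intro s ht hσ hσ2
  have hL := LL_ge s.im
  have hs1 : s ≠ 1 := by rintro rfl; simp at ht; linarith
  set L := LL s.im with hLdef
  have hlo := hlow s ht hσ hσ2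
  have hlo0 : 0 < ‖riemannZeta s‖ := lt_of_lt_of_le (by positivity) hlo
  have hz0 : riemannZeta s ≠ 0 := norm_pos_iff.mp hlo0
  refine ⟨by rw [Z_of_ne hs1]; exact mul_ne_zero (sub_ne_zero.mpr hs1) hz0, ?_⟩
  have hη1 : κ / L ^ 9 ≤ 1 / (4 * L) := by
    rw [div_le_div_iff₀ (by positivity) (by positivity)]
    have : (4 : ℝ) ≤ L ^ 8 := by
      calc (4 : ℝ) ≤ 2 ^ 8 := by norm_num
        _ ≤ L ^ 8 := by gcongr
    have h9 : L ^ 9 = L ^ 8 * L := by ring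
    rw [h9]
    nlinarith
  have hη2 : 1 / (4 * L) ≤ 1 / L := one_div_le_one_div_of_le (by linarith) (by linarith)
  have h1 := hz s (by linarith) (by rw [← hLdef]; linarith) (by linarith)
  have h2 := hder s ht (by rw [← hLdef]; linarith) hσ2
  rw [FF_eq hs1 hz0]
  refine (norm_sub_le _ _).trans ?_
  rw [norm_div, norm_neg]
  have h3 : ‖deriv riemannZeta s‖ / ‖riemannZeta s‖ ≤ D / c * L ^ 9 := by
    calc _ ≤ D * L ^ 2 / (c / L ^ 7) := by gcongr
      _ = D / c * L ^ 9 := by field_simp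
  have h4 : C * L ≤ C * L ^ 9 := by
    gcongr
    exact le_self_pow₀ (by linarith) (by norm_num)
  nlinarith

lemma FF_iter_bound_large (k : ℕ) : ∃ C : ℝ, ∃ m : ℕ, 0 < C ∧ ∀ s : ℂ, 3 ≤ |s.im| → 1 ≤ s.re →
    s.re ≤ 3 / 2 → ‖iteratedDeriv k FF s‖ ≤ C * LL s.im ^ m := by
  obtain ⟨κ, C, hκ, hκ1, hC, h⟩ := FF_bound
  refine ⟨(k.factorial : ℝ) * (C * 2 ^ 9) / (κ / 2 ^ 9) ^ k, 9 + 9 * k, by positivity, ?_⟩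
  intro s ht hσ hσ2
  have hL := LL_ge s.im
  set L := LL s.im with hLdef
  set r := κ / (2 * L) ^ 9 with hr
  have hr0 : 0 < r := by positivity
  have hr1 : r ≤ 1 / 2 := by
    rw [hr, div_le_div_iff₀ (by positivity) (by norm_num)]
    have : (2 : ℝ) ≤ (2 * L) ^ 9 := by
      calc (2 : ℝ) ≤ 2 ^ 9 := by norm_num
        _ ≤ (2 * L) ^ 9 := by gcongr; linarith
    linarith
  have key : ∀ z : ℂ, ‖z - s‖ ≤ r → Z z ≠ 0 ∧ ‖FF z‖ ≤ C * (2 * L) ^ 9 := by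
    intro z hz
    have i1 : |z.im - s.im| ≤ r := by simpa using (Complex.abs_im_le_norm (z - s)).trans hz
    have i2 : |z.re - s.re| ≤ r := by simpa using (Complex.abs_re_le_norm (z - s)).trans hz
    have h2 := abs_sub_abs_le_abs_sub s.im z.im
    have h3 := abs_sub_abs_le_abs_sub z.im s.im
    rw [abs_sub_comm] at h2
    have h5 := abs_le.mp i2
    have hL2 : LL z.im ≤ 2 * L := LL_le_two (by linarith [abs_nonneg s.im])
    have hLz := LL_ge z.im
    have h6 : r ≤ κ / LL z.im ^ 9 := by rw [hr]; gcongr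
    have h7 := h z (by linarith) (by linarith) (by linarith)
    refine ⟨h7.1, h7.2.trans ?_⟩
    gcongr
  have := Complex.norm_iteratedDeriv_le_of_forall_mem_sphere_norm_le (f := FF) (c := s)
    (R := r) (C := C * (2 * L) ^ 9) k hr0 ?_ ?_
  · refine this.trans (le_of_eq ?_)
    rw [hr]
    have e : κ / (2 * L) ^ 9 = (κ / 2 ^ 9) / L ^ 9 := by rw [mul_pow]; field_simp
    rw [e, div_pow, pow_add, pow_mul]
    field_simp
  · refine DifferentiableOn.diffContOnCl ?_
    rw [closure_ball _ hr0.ne']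
    intro z hz
    exact (FF_diffAt (key z (by simpa [dist_eq_norm] using hz)).1).differentiableWithinAt
  · intro z hz
    have hz' : ‖z - s‖ = r := by simpa [dist_eq_norm] using hz
    exact (key z hz'.le).2

lemma FF_iter_contOn (k : ℕ) : ContinuousOn (iteratedDeriv k FF) {s : ℂ | 1 ≤ s.re} := by
  have hopen : IsOpen {s : ℂ | Z s ≠ 0} := isOpen_ne_fun Z_diff.continuous continuous_const
  have : AnalyticOnNhd ℂ FF {s : ℂ | Z s ≠ 0} :=
    DifferentiableOn.analyticOnNhd (fun s hs => (FF_diffAt hs).differentiableWithinAt) hopen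
  have h2 := this.iterated_deriv k
  rw [← iteratedDeriv_eq_iterate] at h2
  exact h2.continuousOn.mono (fun s hs => Z_ne_zero hs)

lemma FF_iter_bound (k : ℕ) : ∃ C : ℝ, 0 < C ∧ ∀ s : ℂ, 1 ≤ s.re →
    s.re ≤ 3 / 2 → ‖iteratedDeriv k FF s‖ ≤ C * (1 + |s.im|) ^ (1 / 2 : ℝ) := by
  obtain ⟨C, m, hC, h⟩ := FF_iter_bound_large k
  -- compact part
  obtain ⟨K, hK⟩ := ((isCompact_Icc (a := (1 : ℝ)) (b := 3 / 2)).reProdIm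
    (isCompact_Icc (a := (-3 : ℝ)) (b := 3))).exists_bound_of_continuousOn
    (f := iteratedDeriv k FF) ((FF_iter_contOn k).mono (fun s hs => hs.1.1))
  have hlog : ∃ B : ℝ, 0 < B ∧ ∀ t : ℝ, LL t ^ m ≤ B * (1 + |t|) ^ (1 / 2 : ℝ) := by
    refine ⟨((2 * m + 1 : ℝ)) ^ m * 10 ^ (1 / 2 : ℝ), by positivity, ?_⟩
    intro t
    have hL := LL_ge t
    have hp : (0 : ℝ) < |t| + 10 := by positivity
    have h1 : LL t ≤ (2 * m + 1) * (|t| + 10) ^ (1 / (2 * m + 1) : ℝ) := by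
      have := Real.log_le_rpow_div hp.le (show (0 : ℝ) < 1 / (2 * m + 1) by positivity)
      unfold LL
      refine this.trans (le_of_eq ?_)
      field_simp
    calc LL t ^ m ≤ ((2 * m + 1) * (|t| + 10) ^ (1 / (2 * m + 1) : ℝ)) ^ m := by gcongr
      _ = (2 * m + 1) ^ m * (|t| + 10) ^ (1 / (2 * m + 1) * m : ℝ) := by
        rw [mul_pow, ← Real.rpow_natCast ((|t| + 10) ^ (1 / (2 * m + 1) : ℝ)), ← Real.rpow_mul hp.le]
      _ ≤ (2 * m + 1) ^ m * (|t| + 10) ^ (1 / 2 : ℝ) := by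
        gcongr
        · linarith [abs_nonneg t]
        · rw [div_mul_eq_mul_div, div_le_div_iff₀ (by positivity) (by norm_num)]; linarith
      _ ≤ (2 * m + 1) ^ m * (10 * (1 + |t|)) ^ (1 / 2 : ℝ) := by
        gcongr; linarith [abs_nonneg t]
      _ = _ := by rw [Real.mul_rpow (by norm_num) (by positivity)]; ring
  obtain ⟨B, hB, hBt⟩ := hlog
  refine ⟨C * B + |K|, by positivity, ?_⟩
  intro s h1 h2
  have hge : 1 ≤ (1 + |s.im|) ^ (1 / 2 : ℝ) :=
    Real.one_le_rpow (by linarith [abs_nonneg s.im]) (by norm_num)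
  rcases le_total 3 |s.im| with h3 | h3
  · refine (h s h3 h1 h2).trans ?_
    have := mul_le_mul_of_nonneg_left (hBt s.im) hC.le
    nlinarith [abs_nonneg K]
  · refine (hK s ⟨⟨h1, h2⟩, abs_le.mp h3⟩).trans ?_
    have : 0 < C * B := by positivity
    nlinarith [abs_nonneg K, le_abs_self K]

end MLPF

namespace MLPF
open scoped ArithmeticFunction.vonMangoldt

/-- hat kernel -/
noncomputable def hat (u : ℝ) : ℂ := ((max 0 (1 - u) : ℝ) : ℂ)

lemma hat_cont : Continuous hat := by unfold hat; fun_prop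

lemma hat_hasMellin {s : ℂ} (hs : 0 < s.re) : HasMellin hat s (1 / (s * (s + 1))) := by
  have h1 := hasMellin_sub (hasMellin_one_Ioc hs).1
    (hasMellin_cpow_Ioc (1 : ℂ) (s := s) (by simp; linarith)).1
  rw [(hasMellin_one_Ioc hs).2, (hasMellin_cpow_Ioc (1 : ℂ) (s := s) (by simp; linarith)).2] at h1
  have hs0 : s ≠ 0 := by rintro rfl; simp at hs
  have hs1 : s + 1 ≠ 0 := by
    intro h
    have := congrArg Complex.re h
    simp at this; linarith
  have e : 1 / s - 1 / (s + 1) = 1 / (s * (s + 1)) := by field_simp; ring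
  rw [e] at h1
  have hcongr : ∀ t ∈ Set.Ioi (0 : ℝ), (t : ℂ) ^ (s - 1) • ((Set.Ioc 0 1).indicator (fun _ => (1 : ℂ)) t -
      (Set.Ioc 0 1).indicator (fun t : ℝ => (t : ℂ) ^ (1 : ℂ)) t) = (t : ℂ) ^ (s - 1) • hat t := by
    intro t ht
    have ht' : 0 < t := ht
    congr 1
    by_cases h : t ≤ 1
    · have hm : t ∈ Set.Ioc (0:ℝ) 1 := ⟨ht', h⟩
      rw [Set.indicator_of_mem hm, Set.indicator_of_mem hm]
      simp [hat, h]
    · have hm : t ∉ Set.Ioc (0:ℝ) 1 := fun h' => h h'.2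
      rw [Set.indicator_of_notMem hm, Set.indicator_of_notMem hm]
      push Not at h
      simp [hat, h.le]
  constructor
  · exact (integrableOn_congr_fun hcongr measurableSet_Ioi).mp h1.1
  · rw [← h1.2]
    exact (setIntegral_congr_fun measurableSet_Ioi hcongr).symm

lemma kernel_bound {σ : ℝ} (hσ : 1 ≤ σ) (y : ℝ) :
    ‖(1 : ℂ) / ((σ + y * Complex.I) * (σ + y * Complex.I + 1))‖ ≤ 4 * (1 + |y|) ^ (-2 : ℝ) := by
  have h1 : (1 + |y|) / 2 ≤ ‖(σ + y * Complex.I : ℂ)‖ := by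
    have a := Complex.abs_re_le_norm (σ + y * Complex.I : ℂ)
    have b := Complex.abs_im_le_norm (σ + y * Complex.I : ℂ)
    simp at a b
    rw [abs_of_nonneg (by linarith)] at a
    linarith
  have h2 : (1 + |y|) / 2 ≤ ‖(σ + y * Complex.I + 1 : ℂ)‖ := by
    have a := Complex.abs_re_le_norm (σ + y * Complex.I + 1 : ℂ)
    have b := Complex.abs_im_le_norm (σ + y * Complex.I + 1 : ℂ)
    simp at a b
    rw [abs_of_nonneg (by linarith)] at a
    linarith
  have h0 : 0 < 1 + |y| := by positivity
  rw [norm_div, norm_mul, norm_one, Real.rpow_neg h0.le]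
  rw [show (1 + |y|) ^ (2 : ℝ) = (1 + |y|) ^ 2 by norm_cast]
  calc 1 / (‖(σ + y * Complex.I : ℂ)‖ * ‖(σ + y * Complex.I + 1 : ℂ)‖)
      ≤ 1 / ((1 + |y|) / 2 * ((1 + |y|) / 2)) := by gcongr
    _ = _ := by field_simp; norm_num

lemma integrable_kernel (r : ℝ) (hr : 1 < r) : Integrable (fun y : ℝ => (1 + |y|) ^ (-r)) := by
  simpa using integrable_one_add_norm (E := ℝ) (μ := volume) (r := r) (by simpa using hr)

lemma kernel_cont {σ : ℝ} (hσ : 1 ≤ σ) :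
    Continuous (fun y : ℝ => (1 : ℂ) / ((σ + y * Complex.I) * (σ + y * Complex.I + 1))) := by
  refine Continuous.div continuous_const (by fun_prop) ?_
  intro y
  refine mul_ne_zero ?_ ?_ <;> intro h <;> have := congrArg Complex.re h <;> simp at this <;> linarith

lemma kernel_integrable {σ : ℝ} (hσ : 1 ≤ σ) :
    Integrable (fun y : ℝ => (1 : ℂ) / ((σ + y * Complex.I) * (σ + y * Complex.I + 1))) := by
  refine Integrable.mono' ((integrable_kernel 2 (by norm_num)).const_mul 4)
    (kernel_cont hσ).aestronglyMeasurable ?_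
  exact Filter.Eventually.of_forall (fun y => kernel_bound hσ y)

lemma hat_inv {σ : ℝ} (hσ : 1 ≤ σ) {u : ℝ} (hu : 0 < u) :
    hat u = (1 / (2 * Real.pi)) • ∫ y : ℝ, (u : ℂ) ^ (-(σ + y * Complex.I)) •
      ((1 : ℂ) / ((σ + y * Complex.I) * (σ + y * Complex.I + 1))) := by
  have hm : ∀ y : ℝ, mellin hat (σ + y * Complex.I) =
      (1 : ℂ) / ((σ + y * Complex.I) * (σ + y * Complex.I + 1)) := by
    intro y
    exact (hat_hasMellin (by simp; linarith)).2
  have := mellinInv_mellin_eq σ hat hu (hat_hasMellin (by simp; linarith)).1 ?_ hat_cont.continuousAt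
  · rw [← this, mellinInv]
    simp only [hm]
  · simp only [Complex.VerticalIntegrable, hm]
    exact kernel_integrable hσ

/-- coefficients -/
noncomputable def acoef (n : ℕ) : ℂ := (Λ n : ℂ) - 1

lemma acoef_absc : LSeries.abscissaOfAbsConv acoef ≤ 1 := by
  refine LSeries.abscissaOfAbsConv_le_of_forall_lt_LSeriesSummable (x := 1) ?_
  intro y hy
  have h1 := ArithmeticFunction.LSeriesSummable_vonMangoldt (s := y) (by simpa using hy)
  have h2 := LSeriesSummable_one_iff.mpr (show 1 < (y : ℂ).re by simpa using hy)
  exact h1.sub h2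

lemma acoef_LSeries {s : ℂ} (hs : 1 < s.re) : LSeries acoef s = FF s := by
  have h1 := ArithmeticFunction.LSeriesSummable_vonMangoldt hs
  have h2 := LSeriesSummable_one_iff.mpr hs
  have hs1 : s ≠ 1 := by rintro rfl; simp at hs
  rw [FF_eq hs1 (riemannZeta_ne_zero_of_one_lt_re hs),
    ← ArithmeticFunction.LSeries_vonMangoldt_eq_deriv_riemannZeta_div hs,
    ← LSeries_one_eq_riemannZeta hs, ← LSeries_sub h1 h2]
  rfl

lemma acoef_iter {s : ℂ} (hs : 1 < s.re) (k : ℕ) :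
    LSeries (LSeries.logMul^[k] acoef) s = (-1) ^ k * iteratedDeriv k FF s := by
  have h := LSeries_iteratedDeriv (f := acoef) k (s := s)
    (lt_of_le_of_lt acoef_absc (by exact_mod_cast hs))
  have hopen1 : IsOpen {z : ℂ | 1 < z.re} := isOpen_lt continuous_const Complex.continuous_re
  have he : LSeries acoef =ᶠ[nhds s] FF := by
    filter_upwards [hopen1.mem_nhds hs] with z hz
    exact acoef_LSeries hz
  rw [← he.iteratedDeriv_eq k, h, ← mul_assoc, ← mul_pow]
  simp

lemma logMul_iter (k n : ℕ) :
    LSeries.logMul^[k] acoef n = (((Real.log n) ^ k * (Λ n - 1) : ℝ) : ℂ) := by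
  induction k with
  | zero => simp [acoef]
  | succ k ih =>
    rw [Function.iterate_succ_apply', LSeries.logMul, ih]
    push_cast
    rw [← Complex.natCast_log]
    ring

lemma smooth_bound (k : ℕ) : ∃ C : ℝ, 0 < C ∧ ∀ x : ℝ, 8 ≤ x →
    |∑ n ∈ Finset.Icc 1 ⌊x⌋₊, (Λ n - 1) * (Real.log n) ^ k * (x - n)| ≤ C * x ^ 2 := by
  obtain ⟨C, hC, hb⟩ := FF_iter_bound k
  set I : ℝ := ∫ y : ℝ, (1 + |y|) ^ (-(3 / 2) : ℝ) with hI
  have hI0 : 0 ≤ I := integral_nonneg (fun y => by positivity)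
  refine ⟨1 / (2 * Real.pi) * (4 * C * Real.exp 1 * I) + 1, by have := Real.pi_pos; positivity, ?_⟩
  intro x hx
  have hx0 : 0 < x := by linarith
  have hlog : 2 ≤ Real.log x := by
    rw [Real.le_log_iff_exp_le hx0]
    have h1 := Real.exp_one_lt_d9
    have h2 : Real.exp 2 = Real.exp 1 * Real.exp 1 := by rw [← Real.exp_add]; norm_num
    nlinarith [Real.exp_pos 1]
  set σ : ℝ := 1 + 1 / Real.log x with hσ
  have hσ1 : 1 < σ := by rw [hσ]; have : 0 < 1 / Real.log x := by positivity
                         linarith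
  have hσ2 : σ ≤ 3 / 2 := by
    have : 1 / Real.log x ≤ 1 / 2 := one_div_le_one_div_of_le (by norm_num) hlog
    linarith
  have hxσ : x ^ σ = x * Real.exp 1 := by
    rw [hσ, Real.rpow_add hx0, Real.rpow_one, Real.rpow_def_of_pos hx0 (1 / Real.log x),
      mul_one_div_cancel (by linarith)]
  set b : ℕ → ℂ := LSeries.logMul^[k] acoef with hbdef
  let s : ℝ → ℂ := fun y => σ + y * Complex.I
  have hsre : ∀ y, (s y).re = σ := by intro y; simp [s]
  have hsim : ∀ y, (s y).im = y := by intro y; simp [s]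
  let Ker : ℝ → ℂ := fun y => (1 : ℂ) / ((σ + y * Complex.I) * (σ + y * Complex.I + 1))
  let G : ℕ → ℝ → ℂ := fun n y => LSeries.term b (s y) n * ((x : ℂ) ^ (s y) * Ker y)
  have hscont : Continuous s := by fun_prop
  have hxc : Continuous (fun y => (x : ℂ) ^ (s y)) :=
    hscont.const_cpow (Or.inl (by exact_mod_cast hx0.ne'))
  have hxn : ∀ y, ‖(x : ℂ) ^ (s y)‖ = x * Real.exp 1 := by
    intro y; rw [Complex.norm_cpow_eq_rpow_re_of_pos hx0, hsre, hxσ]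
  have htn : ∀ n y, ‖LSeries.term b (s y) n‖ = ‖LSeries.term b σ n‖ := by
    intro n y
    rw [LSeries.norm_term_eq, LSeries.norm_term_eq, hsre]; simp
  have hGn : ∀ n y, ‖G n y‖ = ‖LSeries.term b σ n‖ * (x * Real.exp 1 * ‖Ker y‖) := by
    intro n y
    simp only [G]
    rw [norm_mul, norm_mul, htn, hxn]
  have hKc : Continuous Ker := kernel_cont hσ1.le
  have hKi : Integrable Ker := kernel_integrable hσ1.le
  have htc : ∀ n, Continuous (fun y => LSeries.term b (s y) n) := by
    intro n
    rcases Nat.eq_zero_or_pos n with h | h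
    · subst h; simp [continuous_const]
    · simp only [LSeries.term_of_ne_zero h.ne']
      have hn : (n : ℂ) ≠ 0 := by exact_mod_cast h.ne'
      refine continuous_const.div (hscont.const_cpow (Or.inl hn)) ?_
      intro y; simp [Complex.cpow_eq_zero_iff, hn]
  have hGi : ∀ n, Integrable (G n) := by
    intro n
    refine Integrable.mono' ((hKi.norm.const_mul (x * Real.exp 1)).const_mul ‖LSeries.term b σ n‖)
      ((htc n).mul (hxc.mul hKc)).aestronglyMeasurable ?_
    exact Filter.Eventually.of_forall (fun y => (hGn n y).le)
  have hbs : LSeriesSummable b σ := by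
    refine LSeriesSummable_of_abscissaOfAbsConv_lt_re ?_
    rw [hbdef, LSeries.absicssaOfAbsConv_logPowMul]
    exact lt_of_le_of_lt acoef_absc (by rw [Complex.ofReal_re]; exact_mod_cast hσ1)
  have hsum : Summable (fun n => ∫ y, ‖G n y‖) := by
    simp only [hGn, integral_const_mul]
    exact hbs.norm.mul_right _
  have hS := MeasureTheory.hasSum_integral_of_summable_integral_norm hGi hsum
  have hterm : ∀ n, ∫ y, G n y = (2 * Real.pi) * (if n = 0 then 0 else b n * hat (n / x)) := by
    intro n
    rcases Nat.eq_zero_or_pos n with h | h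
    · subst h; simp [G]
    · rw [if_neg h.ne']
      have hn : (0 : ℝ) < n := by exact_mod_cast h
      rw [hat_inv hσ1.le (u := n / x) (by positivity)]
      have e : ∀ y, G n y = b n * (((n / x : ℝ) : ℂ) ^ (-(σ + y * Complex.I)) • Ker y) := by
        intro y
        simp only [G, LSeries.term_of_ne_zero h.ne', smul_eq_mul]
        have : (((n / x : ℝ) : ℂ) ^ (-(σ + y * Complex.I))) = (x : ℂ) ^ (s y) / (n : ℂ) ^ (s y) := by
          rw [Complex.ofReal_div, div_eq_mul_inv, ← Complex.ofReal_inv,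
            Complex.mul_cpow_ofReal_nonneg hn.le (by positivity)]
          rw [Complex.ofReal_inv, Complex.inv_cpow _ _ (by
            rw [Complex.arg_ofReal_of_nonneg hx0.le]; exact Real.pi_pos.ne), Complex.cpow_neg,
            Complex.cpow_neg, inv_inv]
          simp only [s, Complex.ofReal_natCast]
          rw [mul_comm]; rfl
        rw [this]; ring
      simp only [e, integral_const_mul]
      rw [Complex.real_smul]
      push_cast
      have hpi : (Real.pi : ℂ) ≠ 0 := by exact_mod_cast Real.pi_pos.ne'
      have hJ : ∀ B J : ℂ, B * J = 2 * Real.pi * (B * (1 / (2 * Real.pi) * J)) := by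
        intro B J; field_simp
      exact hJ _ _
  -- the sum
  have hfin : (∑ n ∈ Finset.Icc 1 ⌊x⌋₊, b n * hat (n / x)) * (2 * Real.pi) = ∫ y, ∑' n, G n y := by
    rw [← hS.tsum_eq]
    simp only [hterm]
    rw [tsum_mul_left, mul_comm]
    congr 1
    rw [tsum_eq_sum (s := Finset.Icc 1 ⌊x⌋₊)]
    · refine Finset.sum_congr rfl ?_
      intro n hn
      rw [if_neg (by have := (Finset.mem_Icc.mp hn).1; omega)]
    · intro n hn
      split_ifs with h0
      · rfl
      · have hlt : x < n := by
          rw [← Nat.floor_lt hx0.le]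
          by_contra hcon
          exact hn (Finset.mem_Icc.mpr ⟨by omega, by omega⟩)
        have : (1 : ℝ) ≤ n / x := by rw [le_div_iff₀ hx0]; linarith
        simp [hat, this]
  have hint : ‖∫ y, ∑' n, G n y‖ ≤ 4 * C * Real.exp 1 * I * x := by
    have e : ∀ y, ‖∑' n, G n y‖ ≤ (4 * C * Real.exp 1 * x) * (1 + |y|) ^ (-(3 / 2) : ℝ) := by
      intro y
      have : ∑' n, G n y = LSeries b (s y) * ((x : ℂ) ^ (s y) * Ker y) := by
        simp only [G]; rw [tsum_mul_right]; rfl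
      rw [this, acoef_iter (by rw [hsre]; exact hσ1), norm_mul, norm_mul, norm_mul, hxn]
      have h1 := hb (s y) (by rw [hsre]; exact hσ1.le) (by rw [hsre]; exact hσ2)
      rw [hsim] at h1
      have h2 := kernel_bound hσ1.le y
      have h3 : ‖((-1 : ℂ)) ^ k‖ = 1 := by simp
      rw [h3, one_mul]
      calc _ ≤ C * (1 + |y|) ^ (1 / 2 : ℝ) * (x * Real.exp 1 * (4 * (1 + |y|) ^ (-2 : ℝ))) := by gcongr
        _ = (4 * C * Real.exp 1 * x) * ((1 + |y|) ^ (1 / 2 : ℝ) * (1 + |y|) ^ (-2 : ℝ)) := by ring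
        _ = _ := by rw [← Real.rpow_add (by positivity)]; norm_num
    refine (norm_integral_le_of_norm_le ((integrable_kernel (3 / 2) (by norm_num)).const_mul _)
      (Filter.Eventually.of_forall e)).trans (le_of_eq ?_)
    rw [integral_const_mul, ← hI]; ring
  have hreal : ((∑ n ∈ Finset.Icc 1 ⌊x⌋₊, (Λ n - 1) * (Real.log n) ^ k * (x - n) : ℝ) : ℂ) =
      x * ∑ n ∈ Finset.Icc 1 ⌊x⌋₊, b n * hat (n / x) := by
    rw [Finset.mul_sum]
    push_cast
    refine Finset.sum_congr rfl ?_
    intro n hn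
    have hn2 : (n : ℝ) ≤ x := (Nat.le_floor_iff hx0.le).mp (Finset.mem_Icc.mp hn).2
    have : (n : ℝ) / x ≤ 1 := by rw [div_le_one hx0]; exact hn2
    rw [hbdef, logMul_iter, hat, max_eq_right (by linarith)]
    have hxne : (x : ℂ) ≠ 0 := by exact_mod_cast hx0.ne'
    push_cast
    field_simp
  have h5 : ‖∑ n ∈ Finset.Icc 1 ⌊x⌋₊, b n * hat (n / x)‖ * (2 * Real.pi) ≤ 4 * C * Real.exp 1 * I * x := by
    rw [← hfin, norm_mul] at hint
    have : ‖(2 * Real.pi : ℂ)‖ = 2 * Real.pi := by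
      rw [norm_mul, Complex.norm_real, Real.norm_of_nonneg Real.pi_pos.le]; simp
    rwa [this] at hint
  rw [← Real.norm_eq_abs, ← Complex.norm_real, hreal, norm_mul, Complex.norm_real,
    Real.norm_of_nonneg hx0.le]
  have hpi := Real.pi_pos
  have h6 : ‖∑ n ∈ Finset.Icc 1 ⌊x⌋₊, b n * hat (n / x)‖ ≤
      1 / (2 * Real.pi) * (4 * C * Real.exp 1 * I) * x := by
    rw [show 1 / (2 * Real.pi) * (4 * C * Real.exp 1 * I) * x = 4 * C * Real.exp 1 * I * x / (2 * Real.pi) by ring,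
      le_div_iff₀ (by positivity)]
    exact h5
  nlinarith
end MLPF

namespace MLPF
open scoped ArithmeticFunction.vonMangoldt

lemma abel_ineq (c f : ℕ → ℝ) (a b : ℕ) (B : ℝ) (hB : 0 ≤ B)
    (hf0 : ∀ n, a + 1 ≤ n → 0 ≤ f n)
    (hf : ∀ n, a + 1 ≤ n → f (n + 1) ≤ f n)
    (hS : ∀ j, a ≤ j → j ≤ b → |∑ n ∈ Finset.Ioc a j, c n| ≤ B) :
    |∑ n ∈ Finset.Ioc a b, c n * f n| ≤ B * f (a + 1) := by
  rcases Nat.lt_or_ge a b with hab | hab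
  swap
  · rw [Finset.Ioc_eq_empty (by omega)]
    simp
    exact mul_nonneg hB (hf0 _ le_rfl)
  have key : ∀ j, a + 1 ≤ j → j ≤ b →
      |∑ n ∈ Finset.Ioc a j, c n * f n - f j * ∑ n ∈ Finset.Ioc a j, c n| ≤ B * (f (a + 1) - f j) := by
    intro j hj
    induction j, hj using Nat.le_induction with
    | base => intro _; simp [mul_comm]
    | succ j hj ih =>
      intro hjb
      have h1 := ih (by omega)
      have h2 := hS j (by omega) (by omega)
      rw [Finset.sum_Ioc_succ_top (by omega), Finset.sum_Ioc_succ_top (by omega)]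
      have h3 := hf j hj
      have e : ∑ n ∈ Finset.Ioc a j, c n * f n + c (j + 1) * f (j + 1) -
          f (j + 1) * (∑ n ∈ Finset.Ioc a j, c n + c (j + 1)) =
          (∑ n ∈ Finset.Ioc a j, c n * f n - f j * ∑ n ∈ Finset.Ioc a j, c n) +
          (f j - f (j + 1)) * ∑ n ∈ Finset.Ioc a j, c n := by ring
      rw [e]
      have h4 : |(f j - f (j + 1)) * ∑ n ∈ Finset.Ioc a j, c n| ≤ (f j - f (j + 1)) * B := by
        rw [abs_mul, abs_of_nonneg (by linarith)]
        exact mul_le_mul_of_nonneg_left h2 (by linarith)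
      refine (abs_add_le _ _).trans ?_
      linarith
  have h1 := key b hab le_rfl
  have h2 : |f b * ∑ n ∈ Finset.Ioc a b, c n| ≤ f b * B := by
    rw [abs_mul, abs_of_nonneg (hf0 b hab)]
    exact mul_le_mul_of_nonneg_left (hS b hab.le le_rfl) (hf0 b hab)
  have e : ∑ n ∈ Finset.Ioc a b, c n * f n = (∑ n ∈ Finset.Ioc a b, c n * f n -
    f b * ∑ n ∈ Finset.Ioc a b, c n) + f b * ∑ n ∈ Finset.Ioc a b, c n := by ring
  rw [e]
  refine (abs_add_le _ _).trans ?_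
  linarith

lemma log_pow_le_self (m : ℕ) {x : ℝ} (hx : 1 ≤ x) : (Real.log x) ^ m ≤ m.factorial * x := by
  have h := Real.pow_div_factorial_le_exp (Real.log x) (Real.log_nonneg hx) m
  rw [Real.exp_log (by linarith), div_le_iff₀ (by positivity)] at h
  linarith

lemma log_pow_le_sqrt (m : ℕ) {x : ℝ} (hx : 1 ≤ x) :
    (Real.log x) ^ m ≤ 2 ^ m * m.factorial * √x := by
  have h := log_pow_le_self m (x := √x) (by rw [Real.one_le_sqrt]; exact hx)
  rw [Real.log_sqrt (by linarith), div_pow, div_le_iff₀ (by positivity)] at h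
  linarith

lemma one_le_log_of {x : ℝ} (hx : 3 ≤ x) : 1 ≤ Real.log x := by
  rw [Real.le_log_iff_exp_le (by linarith)]
  have := Real.exp_one_lt_d9
  linarith

lemma abs_acoef_le {n : ℕ} (hn : 3 ≤ n) : |Λ n - 1| ≤ Real.log n := by
  have h1 : Λ n ≤ Real.log n := ArithmeticFunction.vonMangoldt_le_log
  have h2 : 0 ≤ Λ n := ArithmeticFunction.vonMangoldt_nonneg
  have h3 : 1 ≤ Real.log n := one_le_log_of (by exact_mod_cast hn)
  rw [abs_le]; constructor <;> linarith

lemma weighted_bound (m : ℕ) : ∃ C > 0, ∀ N : ℕ, 8 ≤ N →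
    |∑ n ∈ Finset.Icc 1 N, (Λ n - 1) * (Real.log n) ^ (2 * m)| ≤ C * N * (Real.log N) ^ (m + 1) := by
  obtain ⟨C, hC, hb⟩ := smooth_bound (2 * m)
  refine ⟨10 * C + (1 + m.factorial) * 2 ^ (2 * m + 1), by positivity, ?_⟩
  intro N hN
  have hN8 : (8 : ℝ) ≤ N := by exact_mod_cast hN
  set L := Real.log N with hL
  have hL1 : 1 ≤ L := one_le_log_of (by linarith)
  have hLm : 1 ≤ L ^ m := one_le_pow₀ hL1
  set H : ℕ := ⌊(N : ℝ) / L ^ m⌋₊ + 1 with hH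
  have hH1 : (N : ℝ) / L ^ m ≤ H := by
    rw [hH]; push_cast; exact (Nat.lt_floor_add_one _).le
  have hH0 : (0 : ℝ) < H := by rw [hH]; positivity
  have hH2 : (H : ℝ) ≤ (N : ℝ) / L ^ m + 1 := by
    rw [hH]; push_cast
    have := Nat.floor_le (a := (N : ℝ) / L ^ m) (by positivity)
    linarith
  have hH3 : (H : ℝ) ≤ (1 + m.factorial) * (N / L ^ m) := by
    have h := log_pow_le_self m (x := N) (by linarith)
    have : 1 ≤ m.factorial * ((N : ℝ) / L ^ m) := by
      rw [← mul_div_assoc, le_div_iff₀ (by positivity)]; linarith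
    linarith
  have hH4 : (H : ℝ) ≤ 2 * N := by
    have : (N : ℝ) / L ^ m ≤ N := div_le_self (by linarith) hLm
    linarith
  have hb1 := hb N hN8
  have hb2 := hb ((N + H : ℕ) : ℝ) (by push_cast; linarith)
  rw [Nat.floor_natCast] at hb1 hb2
  set w : ℕ → ℝ := fun n => (Λ n - 1) * (Real.log n) ^ (2 * m) with hw
  change |∑ n ∈ Finset.Icc 1 N, w n * (N - n)| ≤ _ at hb1
  change |∑ n ∈ Finset.Icc 1 (N + H), w n * (((N + H : ℕ) : ℝ) - n)| ≤ _ at hb2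
  change |∑ n ∈ Finset.Icc 1 N, w n| ≤ _
  have hsplit : ∑ n ∈ Finset.Icc 1 (N + H), w n * (((N + H : ℕ) : ℝ) - n) =
      ∑ n ∈ Finset.Icc 1 N, w n * (N - n) + H * ∑ n ∈ Finset.Icc 1 N, w n +
      ∑ n ∈ Finset.Ioc N (N + H), w n * (((N + H : ℕ) : ℝ) - n) := by
    have e1 : Finset.Icc 1 (N + H) = Finset.Ioc 0 (N + H) := rfl
    have e2 : Finset.Icc 1 N = Finset.Ioc 0 N := rfl
    rw [e1, e2, ← Finset.sum_Ioc_consecutive _ (Nat.zero_le N) (Nat.le_add_right N H), Finset.mul_sum,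
      ← Finset.sum_add_distrib]
    congr 1
    refine Finset.sum_congr rfl ?_
    intro n _
    push_cast; ring
  have htail : |∑ n ∈ Finset.Ioc N (N + H), w n * (((N + H : ℕ) : ℝ) - n)| ≤
      H * (H * (2 * L) ^ (2 * m + 1)) := by
    refine (Finset.abs_sum_le_sum_abs _ _).trans ?_
    have : ∀ n ∈ Finset.Ioc N (N + H), |w n * (((N + H : ℕ) : ℝ) - n)| ≤ H * (2 * L) ^ (2 * m + 1) := by
      intro n hn
      obtain ⟨hn1, hn2⟩ := Finset.mem_Ioc.mp hn
      have hn1' : (N : ℝ) ≤ n := by exact_mod_cast hn1.le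
      have hn2' : (n : ℝ) ≤ N + H := by exact_mod_cast hn2
      have hlog : Real.log n ≤ 2 * L := by
        have : Real.log n ≤ Real.log (N * N) := by
          apply Real.log_le_log (by linarith); nlinarith
        rw [Real.log_mul (by positivity) (by positivity)] at this
        linarith
      have hlog0 : 0 ≤ Real.log n := Real.log_nonneg (by linarith)
      have h1 : |w n| ≤ (2 * L) ^ (2 * m + 1) := by
        rw [hw, abs_mul, abs_of_nonneg (pow_nonneg hlog0 _), pow_succ, mul_comm]
        have := abs_acoef_le (n := n) (by omega)
        gcongr
        linarith
      have h2 : |((N + H : ℕ) : ℝ) - n| ≤ H := by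
        push_cast; rw [abs_le]; constructor <;> linarith
      rw [abs_mul, mul_comm]
      gcongr
    refine (Finset.sum_le_sum this).trans ?_
    rw [Finset.sum_const, Nat.card_Ioc]
    simp
  have hHA : H * |∑ n ∈ Finset.Icc 1 N, w n| ≤ 10 * C * N ^ 2 + H * (H * (2 * L) ^ (2 * m + 1)) := by
    have e : H * ∑ n ∈ Finset.Icc 1 N, w n = ∑ n ∈ Finset.Icc 1 (N + H), w n * (((N + H : ℕ) : ℝ) - n)
      - ∑ n ∈ Finset.Icc 1 N, w n * (N - n) -
      ∑ n ∈ Finset.Ioc N (N + H), w n * (((N + H : ℕ) : ℝ) - n) := by linarith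
    rw [← abs_of_pos hH0, ← abs_mul, abs_of_pos hH0, e]
    refine (abs_sub _ _).trans ((add_le_add_left (abs_sub _ _) _).trans ?_)
    have : C * ((N + H : ℕ) : ℝ) ^ 2 ≤ 9 * C * N ^ 2 := by
      push_cast
      have : ((N : ℝ) + H) ^ 2 ≤ (3 * N) ^ 2 := by gcongr; linarith
      nlinarith
    linarith
  have h5 : |∑ n ∈ Finset.Icc 1 N, w n| ≤ 10 * C * N ^ 2 / H + H * (2 * L) ^ (2 * m + 1) := by
    rw [← mul_le_mul_iff_of_pos_left hH0, mul_add, mul_div_cancel₀ _ hH0.ne']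
    linarith
  refine h5.trans ?_
  have h6 : 10 * C * N ^ 2 / H ≤ 10 * C * N * L ^ m := by
    rw [div_le_iff₀ hH0]
    rw [div_le_iff₀ (by positivity)] at hH1
    calc 10 * C * (N : ℝ) ^ 2 = 10 * C * N * N := by ring
      _ ≤ 10 * C * N * (H * L ^ m) := by gcongr
      _ = _ := by ring
  have h7 : H * (2 * L) ^ (2 * m + 1) ≤ (1 + m.factorial) * 2 ^ (2 * m + 1) * N * L ^ (m + 1) := by
    calc H * (2 * L) ^ (2 * m + 1) ≤ (1 + m.factorial) * (N / L ^ m) * (2 * L) ^ (2 * m + 1) := by gcongr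
      _ = _ := by
        rw [mul_pow, show 2 * m + 1 = m + (m + 1) by ring, pow_add L]
        field_simp
  have h8 : L ^ m ≤ L ^ (m + 1) := pow_le_pow_right₀ hL1 (by omega)
  have h9 : 10 * C * N * L ^ m ≤ 10 * C * N * L ^ (m + 1) := by gcongr
  linarith

lemma theta_bound (K : ℕ) : ∃ C > 0, ∀ N : ℕ, 100 ≤ N →
    |Chebyshev.theta N - N| ≤ C * N / (Real.log N) ^ K := by
  obtain ⟨C, hC, hb⟩ := weighted_bound (K + 1)
  set D : ℝ := 2 ^ (K + 1) * (K + 1).factorial with hD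
  have hD0 : 0 < D := by positivity
  refine ⟨2 * C * 2 ^ (2 * (K + 1)) + 4 * D, by positivity, ?_⟩
  intro N hN
  have hN8 : (100 : ℝ) ≤ N := by exact_mod_cast hN
  set L := Real.log N with hL
  have hL1 : 1 ≤ L := one_le_log_of (by linarith)
  have hsq : (√(N : ℝ)) ^ 2 = N := Real.sq_sqrt (by linarith)
  have hs10 : 10 ≤ √(N : ℝ) := by
    rw [Real.le_sqrt' (by norm_num)]; linarith
  set a := ⌊√(N : ℝ)⌋₊ with ha
  have ha1 : (a : ℝ) ≤ √N := Nat.floor_le (by positivity)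
  have ha2 : √N < (a : ℝ) + 1 := Nat.lt_floor_add_one _
  have ha10 : 8 ≤ a := by
    rw [ha]; apply Nat.le_floor; push_cast; linarith
  have haN : a ≤ N := by
    have : (a : ℝ) ≤ N := by nlinarith
    exact_mod_cast this
  have hLK : L ^ (K + 1) ≤ D * √N := log_pow_le_sqrt (K + 1) (by linarith)
  have hsmall : √N * L ≤ D * (N / L ^ K) := by
    rw [← mul_div_assoc, le_div_iff₀ (by positivity)]
    calc √N * L * L ^ K = √N * L ^ (K + 1) := by ring
      _ ≤ √N * (D * √N) := by gcongr
      _ = D * (√N) ^ 2 := by ring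
      _ = D * N := by rw [hsq]
  set w : ℕ → ℝ := fun n => (Λ n - 1) * (Real.log n) ^ (2 * (K + 1)) with hw
  have hA : ∀ j, a ≤ j → j ≤ N → |∑ n ∈ Finset.Icc 1 j, w n| ≤ C * N * L ^ (K + 2) := by
    intro j h1 h2
    have hj : (j : ℝ) ≤ N := by exact_mod_cast h2
    have hj0 : (8 : ℝ) ≤ j := by exact_mod_cast ha10.trans h1
    refine (hb j (by omega)).trans ?_
    have hl : Real.log j ≤ L := Real.log_le_log (by linarith) hj
    have hl0 : 0 ≤ Real.log j := Real.log_nonneg (by linarith)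
    gcongr
  have hab := abel_ineq w (fun n => ((Real.log n) ^ (2 * (K + 1)))⁻¹) a N (2 * (C * N * L ^ (K + 2)))
    (by positivity)
    (fun n _ => by
      have : 0 ≤ Real.log n := Real.log_natCast_nonneg n
      positivity)
    (fun n hn => by
      have hn' : (2 : ℝ) ≤ n := by exact_mod_cast (by omega : 2 ≤ n)
      have : 0 < Real.log n := Real.log_pos (by linarith)
      have : Real.log n ≤ Real.log ((n + 1 : ℕ) : ℝ) := by
        apply Real.log_le_log (by linarith); push_cast; linarith
      gcongr)
    (fun j h1 h2 => by
      have e : ∑ n ∈ Finset.Ioc a j, w n = ∑ n ∈ Finset.Icc 1 j, w n - ∑ n ∈ Finset.Icc 1 a, w n := by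
        have e1 : Finset.Icc 1 j = Finset.Ioc 0 j := rfl
        have e2 : Finset.Icc 1 a = Finset.Ioc 0 a := rfl
        rw [e1, e2, ← Finset.sum_Ioc_consecutive _ (Nat.zero_le a) h1]; ring
      rw [e]
      have := hA j h1 h2
      have := hA a le_rfl haN
      refine (abs_sub _ _).trans ?_
      linarith)
  have hmid : |∑ n ∈ Finset.Ioc a N, (Λ n - 1)| ≤ 2 * C * 2 ^ (2 * (K + 1)) * (N / L ^ K) := by
    have e : ∑ n ∈ Finset.Ioc a N, (Λ n - 1) =
        ∑ n ∈ Finset.Ioc a N, w n * ((Real.log n) ^ (2 * (K + 1)))⁻¹ := by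
      refine Finset.sum_congr rfl ?_
      intro n hn
      have h1 := (Finset.mem_Ioc.mp hn).1
      have hn' : (2 : ℝ) ≤ n := by exact_mod_cast (by omega : 2 ≤ n)
      have : 0 < Real.log n := Real.log_pos (by linarith)
      rw [hw]; field_simp
    rw [e]
    refine hab.trans ?_
    have hlog : L / 2 ≤ Real.log ((a + 1 : ℕ) : ℝ) := by
      rw [hL, ← Real.log_sqrt (by linarith)]
      apply Real.log_le_log (by linarith)
      push_cast; exact ha2.le
    calc 2 * (C * N * L ^ (K + 2)) * ((Real.log ((a + 1 : ℕ) : ℝ)) ^ (2 * (K + 1)))⁻¹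
        ≤ 2 * (C * N * L ^ (K + 2)) * ((L / 2) ^ (2 * (K + 1)))⁻¹ := by gcongr
      _ = _ := by
        rw [show 2 * (K + 1) = K + (K + 2) by ring, div_pow, pow_add L]
        field_simp
        ring
  have hlow : |∑ n ∈ Finset.Ioc 0 a, (Λ n - 1)| ≤ 2 * (√N * L) := by
    refine (Finset.abs_sum_le_sum_abs _ _).trans ?_
    have : ∀ n ∈ Finset.Ioc 0 a, |Λ n - 1| ≤ 2 * L := by
      intro n hn
      obtain ⟨h1, h2⟩ := Finset.mem_Ioc.mp hn
      have hn0 : (0 : ℝ) < n := by exact_mod_cast h1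
      have hn1 : (n : ℝ) ≤ N := by exact_mod_cast h2.trans haN
      have g1 : Λ n ≤ Real.log n := ArithmeticFunction.vonMangoldt_le_log
      have g2 : 0 ≤ Λ n := ArithmeticFunction.vonMangoldt_nonneg
      have g3 : Real.log n ≤ L := Real.log_le_log hn0 hn1
      rw [abs_le]; constructor <;> linarith
    refine (Finset.sum_le_sum this).trans ?_
    rw [Finset.sum_const, Nat.card_Ioc, nsmul_eq_mul]
    simp
    nlinarith
  have hpsi : Chebyshev.psi N - N = ∑ n ∈ Finset.Ioc 0 a, (Λ n - 1) + ∑ n ∈ Finset.Ioc a N, (Λ n - 1) := by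
    rw [Finset.sum_Ioc_consecutive _ (Nat.zero_le a) haN, Finset.sum_sub_distrib]
    simp [Chebyshev.psi]
  have hpt := Chebyshev.abs_psi_sub_theta_le_sqrt_mul_log (x := (N : ℝ)) (by linarith)
  have e : Chebyshev.theta N - N = (Chebyshev.psi N - N) - (Chebyshev.psi N - Chebyshev.theta N) := by ring
  rw [e, hpsi]
  refine (abs_sub _ _).trans ?_
  have := abs_add_le (∑ n ∈ Finset.Ioc 0 a, (Λ n - 1)) (∑ n ∈ Finset.Ioc a N, (Λ n - 1))
  rw [mul_div_assoc]
  have hpt' : |Chebyshev.psi N - Chebyshev.theta N| ≤ 2 * (√N * L) := by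
    linarith
  linarith
end MLPF

namespace MLPF

lemma sorted_getElem_le (y : ℕ) : ∀ (l : List ℕ), l.Pairwise (· ≤ ·) → ∀ (k : ℕ) (hk : k < l.length),
    (l[k] ≤ y ↔ k < l.countP (fun a => decide (a ≤ y))) := by
  intro l
  induction l with
  | nil => intro _ k hk; simp at hk
  | cons a t ih =>
    intro hl k hk
    rw [List.pairwise_cons] at hl
    obtain ⟨h1, h2⟩ := hl
    rcases k with _ | k
    · simp only [List.getElem_cons_zero]
      constructor
      · intro h; rw [List.countP_cons]; simp [h]
      · intro h
        rw [List.countP_pos_iff] at h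
        obtain ⟨b, hb, hby⟩ := h
        have hby' : b ≤ y := by simpa using hby
        rcases List.mem_cons.mp hb with rfl | hb
        · exact hby'
        · exact (h1 b hb).trans hby'
    · simp only [List.getElem_cons_succ]
      have hk' : k < t.length := by simpa using hk
      rw [ih h2 k hk', List.countP_cons]
      constructor
      · intro h
        have h3 := (ih h2 k hk').mpr h
        have : a ≤ y := (h1 _ (List.getElem_mem hk')).trans h3
        simp [this, h]
      · intro h
        split_ifs at h <;> omega

/-- number of `n ≤ N` with largest prime factor at most `y` -/
noncomputable def cntLe (N y : ℕ) : ℕ := ((Finset.Icc 1 N).filter (fun n => largestPrimeFactor n ≤ y)).card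

lemma median_le_iff {x : ℝ} (hx : 1 ≤ ⌊x⌋₊) (y : ℕ) :
    medianLPF x ≤ y ↔ (⌊x⌋₊ + 1) / 2 ≤ cntLe ⌊x⌋₊ y := by
  set N := ⌊x⌋₊ with hN
  set s := (Finset.Icc 1 N).val.map largestPrimeFactor with hs
  have hlen : (s.sort (· ≤ ·)).length = N := by
    rw [Multiset.length_sort, hs, Multiset.card_map]; simp
  have hk : (N + 1) / 2 - 1 < (s.sort (· ≤ ·)).length := by rw [hlen]; omega
  have h1 : medianLPF x = (s.sort (· ≤ ·))[(N + 1) / 2 - 1] := by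
    unfold medianLPF
    rw [← hN, ← hs, List.getD_eq_getElem _ _ hk]
  rw [h1, sorted_getElem_le y _ (Multiset.pairwise_sort s _) _ hk]
  have h2 : (s.sort (· ≤ ·)).countP (fun a => decide (a ≤ y)) = cntLe N y := by
    rw [← Multiset.coe_countP, Multiset.sort_eq, hs, Multiset.countP_map]
    rfl
  rw [h2]; omega

lemma lt_lpf_iff {n y : ℕ} (hn : 1 ≤ n) (hy : 1 ≤ y) :
    y < largestPrimeFactor n ↔ ∃ p, p.Prime ∧ y < p ∧ p ∣ n := by
  unfold largestPrimeFactor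
  split_ifs with h
  · have : n = 1 := by omega
    subst this
    constructor
    · intro h'; omega
    · rintro ⟨p, hp, _, hd⟩
      exact absurd (Nat.dvd_one.mp hd) hp.one_lt.ne'
  · rw [Finset.lt_sup_iff]
    constructor
    · rintro ⟨p, hp, hy'⟩
      exact ⟨p, Nat.prime_of_mem_primeFactors hp, hy', Nat.dvd_of_mem_primeFactors hp⟩
    · rintro ⟨p, hp, hy', hd⟩
      exact ⟨p, Nat.mem_primeFactors.mpr ⟨hp, hd, by omega⟩, hy'⟩

/-- number of `n ≤ N` with a prime factor exceeding `y` (for `y` large) -/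
noncomputable def Gf (N y : ℕ) : ℕ := ∑ p ∈ (Finset.Ioc y N).filter Nat.Prime, N / p

lemma cnt_add_G {N y : ℕ} (hy : 1 ≤ y) (hNy : N < (y + 1) ^ 2) : cntLe N y + Gf N y = N := by
  have h1 : cntLe N y + ((Finset.Icc 1 N).filter (fun n => ¬ largestPrimeFactor n ≤ y)).card = N := by
    unfold cntLe
    rw [Finset.card_filter_add_card_filter_not]; simp
  have h2 : (Finset.Icc 1 N).filter (fun n => ¬ largestPrimeFactor n ≤ y) =
      ((Finset.Ioc y N).filter Nat.Prime).biUnion (fun p => (Finset.Ioc 0 N).filter (fun n => p ∣ n)) := by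
    ext n
    simp only [Finset.mem_filter, Finset.mem_Icc, Finset.mem_biUnion, Finset.mem_Ioc, not_le]
    constructor
    · rintro ⟨⟨h1, h2⟩, h3⟩
      obtain ⟨p, hp, hyp, hd⟩ := (lt_lpf_iff h1 hy).mp h3
      exact ⟨p, ⟨⟨hyp, (Nat.le_of_dvd (by omega) hd).trans h2⟩, hp⟩, ⟨by omega, h2⟩, hd⟩
    · rintro ⟨p, ⟨⟨hyp, _⟩, hp⟩, ⟨h1, h2⟩, hd⟩
      exact ⟨⟨h1, h2⟩, (lt_lpf_iff h1 hy).mpr ⟨p, hp, hyp, hd⟩⟩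
  have h3 : ((Finset.Icc 1 N).filter (fun n => ¬ largestPrimeFactor n ≤ y)).card = Gf N y := by
    rw [h2, Finset.card_biUnion]
    · unfold Gf
      refine Finset.sum_congr rfl ?_
      intro p _
      rw [← Nat.Ioc_filter_dvd_card_eq_div]
    · intro p hp q hq hpq
      rw [Finset.mem_coe, Finset.mem_filter, Finset.mem_Ioc] at hp hq
      rw [Function.onFun, Finset.disjoint_left]
      intro n hn hn'
      rw [Finset.mem_filter, Finset.mem_Ioc] at hn hn'
      have hcop : Nat.Coprime p q := (Nat.coprime_primes hp.2 hq.2).mpr hpq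
      have hd : p * q ∣ n := hcop.mul_dvd_of_dvd_of_dvd hn.2 hn'.2
      have hle := Nat.le_of_dvd hn.1.1 hd
      have : (y + 1) * (y + 1) ≤ p * q := Nat.mul_le_mul hp.1.1 hq.1.1
      have := hn.1.2
      nlinarith
  omega

lemma G_pred {N M : ℕ} (hM : 1 ≤ M) : Gf N (M - 1) ≤ Gf N M + N / M := by
  unfold Gf
  have : (Finset.Ioc (M - 1) N).filter Nat.Prime ⊆ insert M ((Finset.Ioc M N).filter Nat.Prime) := by
    intro p hp
    simp only [Finset.mem_filter, Finset.mem_Ioc, Finset.mem_insert] at hp ⊢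
    have h1 := hp.1.1
    have h2 := hp.1.2
    rcases eq_or_ne p M with h | h
    · left; exact h
    · right; exact ⟨⟨by omega, h2⟩, hp.2⟩
  refine (Finset.sum_le_sum_of_subset this).trans ?_
  rw [Finset.sum_insert (by simp)]
  omega

lemma G_compare (K : ℕ) : ∃ C > 0, ∀ N y : ℕ, 100 ≤ y → 1 ≤ N →
    |(Gf N y : ℝ) - ∑ n ∈ Finset.Ioc y N, ((N / n : ℕ) : ℝ) / Real.log n| ≤
      C * N * (1 + Real.log N) / (Real.log y) ^ K := by
  obtain ⟨C, hC, hb⟩ := theta_bound K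
  refine ⟨2 * C, by positivity, ?_⟩
  intro N y hy hN
  have hy' : (100 : ℝ) ≤ y := by exact_mod_cast hy
  have hly : 1 ≤ Real.log y := one_le_log_of (by linarith)
  set c : ℕ → ℝ := fun n => (if n.Prime then Real.log n else 0) - 1 with hc
  have e1 : (Gf N y : ℝ) - ∑ n ∈ Finset.Ioc y N, ((N / n : ℕ) : ℝ) / Real.log n =
      ∑ n ∈ Finset.Ioc y N, ∑ m ∈ Finset.Icc 1 (N / n), c n * (Real.log n)⁻¹ := by
    unfold Gf
    rw [Finset.sum_filter]
    push_cast
    rw [← Finset.sum_sub_distrib]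
    refine Finset.sum_congr rfl ?_
    intro n hn
    have h1 := (Finset.mem_Ioc.mp hn).1
    have hn' : (2 : ℝ) ≤ n := by exact_mod_cast (by omega : 2 ≤ n)
    have : 0 < Real.log n := Real.log_pos (by linarith)
    rw [Finset.sum_const, Nat.card_Icc, nsmul_eq_mul]
    simp only [hc, Nat.add_sub_cancel]
    split_ifs <;> field_simp <;> ring
  have e2 : ∑ n ∈ Finset.Ioc y N, ∑ m ∈ Finset.Icc 1 (N / n), c n * (Real.log n)⁻¹ =
      ∑ m ∈ Finset.Icc 1 N, ∑ n ∈ Finset.Ioc y (N / m), c n * (Real.log n)⁻¹ := by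
    refine Finset.sum_comm' ?_
    intro n m
    simp only [Finset.mem_Ioc, Finset.mem_Icc]
    constructor
    · rintro ⟨⟨h1, h2⟩, h3, h4⟩
      rw [Nat.le_div_iff_mul_le (by omega)] at h4
      refine ⟨⟨h1, ?_⟩, h3, ?_⟩
      · rw [Nat.le_div_iff_mul_le (by omega)]; linarith
      · nlinarith
    · rintro ⟨⟨h1, h2⟩, h3, h4⟩
      rw [Nat.le_div_iff_mul_le (by omega)] at h2
      refine ⟨⟨h1, ?_⟩, h3, ?_⟩
      · nlinarith
      · rw [Nat.le_div_iff_mul_le (by omega)]; linarith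
  have hinner : ∀ m ∈ Finset.Icc 1 N, |∑ n ∈ Finset.Ioc y (N / m), c n * (Real.log n)⁻¹| ≤
      2 * C * N / (Real.log y) ^ K * (m : ℝ)⁻¹ := by
    intro m hm
    have hm1 := (Finset.mem_Icc.mp hm).1
    have hm1' : (1 : ℝ) ≤ m := by exact_mod_cast hm1
    set J := N / m with hJ
    have hJm : (J : ℝ) ≤ N / m := Nat.cast_div_le
    have hD : ∀ j, y ≤ j → j ≤ J → |Chebyshev.theta j - j| ≤ C * J / (Real.log y) ^ K := by
      intro j h1 h2
      refine (hb j (by omega)).trans ?_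
      have h1' : (y : ℝ) ≤ j := by exact_mod_cast h1
      have h2' : (j : ℝ) ≤ J := by exact_mod_cast h2
      have : Real.log y ≤ Real.log j := Real.log_le_log (by linarith) h1'
      gcongr
    have hth : ∀ j : ℕ, Chebyshev.theta j - j = ∑ n ∈ Finset.Ioc 0 j, c n := by
      intro j
      rw [hc, Finset.sum_sub_distrib, Chebyshev.theta, Finset.sum_filter]
      simp
    rcases Nat.lt_or_ge J y with hlt | hge
    · rw [Finset.Ioc_eq_empty (by omega)]; simp; positivity
    have hab := abel_ineq c (fun n => (Real.log n)⁻¹) y J (2 * (C * J / (Real.log y) ^ K))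
      (by positivity)
      (fun n _ => by
        have : 0 ≤ Real.log n := Real.log_natCast_nonneg n
        positivity)
      (fun n hn => by
        have hn' : (2 : ℝ) ≤ n := by exact_mod_cast (by omega : 2 ≤ n)
        have : 0 < Real.log n := Real.log_pos (by linarith)
        have : Real.log n ≤ Real.log ((n + 1 : ℕ) : ℝ) := by
          apply Real.log_le_log (by linarith); push_cast; linarith
        gcongr)
      (fun j h1 h2 => by
        have e : ∑ n ∈ Finset.Ioc y j, c n = (Chebyshev.theta j - j) - (Chebyshev.theta y - y) := by
          rw [hth, hth, ← Finset.sum_Ioc_consecutive _ (Nat.zero_le y) h1]; ring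
        rw [e]
        have := hD j h1 h2
        have := hD y le_rfl hge
        refine (abs_sub _ _).trans ?_
        linarith)
    refine hab.trans ?_
    have h1 : (Real.log ((y + 1 : ℕ) : ℝ))⁻¹ ≤ 1 := by
      apply inv_le_one_of_one_le₀
      apply one_le_log_of; push_cast; linarith
    calc 2 * (C * J / (Real.log y) ^ K) * (Real.log ((y + 1 : ℕ) : ℝ))⁻¹
        ≤ 2 * (C * (N / m) / (Real.log y) ^ K) * 1 := by
          gcongr
      _ = _ := by field_simp
  rw [e1, e2]
  refine (Finset.abs_sum_le_sum_abs _ _).trans ((Finset.sum_le_sum hinner).trans ?_)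
  rw [← Finset.mul_sum]
  have hh := harmonic_le_one_add_log N
  rw [harmonic_eq_sum_Icc] at hh
  push_cast at hh
  calc _ ≤ 2 * C * N / (Real.log y) ^ K * (1 + Real.log N) := by gcongr
    _ = _ := by ring

lemma F_anti {x a : ℝ} (hx : 0 < x) (ha : 2 ≤ a) :
    AntitoneOn (fun t : ℝ => (⌊x / t⌋₊ : ℝ) / Real.log t) (Set.Ici a) := by
  intro s hs t ht hst
  have hs' : a ≤ s := hs
  have : 0 < Real.log s := Real.log_pos (by linarith)
  have : Real.log s ≤ Real.log t := Real.log_le_log (by linarith) hst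
  have h : ⌊x / t⌋₊ ≤ ⌊x / s⌋₊ := by
    apply Nat.floor_le_floor
    have : 0 < s := by linarith
    gcongr
  have h' : (⌊x / t⌋₊ : ℝ) ≤ ⌊x / s⌋₊ := by exact_mod_cast h
  simp only
  gcongr

lemma sum_integral {x : ℝ} {y : ℕ} (hy : 100 ≤ y) (hyx : (y : ℝ) ≤ x) :
    |∑ n ∈ Finset.Ioc y ⌊x⌋₊, ((⌊x⌋₊ / n : ℕ) : ℝ) / Real.log n -
      ∫ t in (y : ℝ)..x, (⌊x / t⌋₊ : ℝ) / Real.log t| ≤ x / y + 1 := by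
  set N := ⌊x⌋₊ with hN
  have hy' : (100 : ℝ) ≤ y := by exact_mod_cast hy
  have hx0 : 0 < x := by linarith
  have hyN : y ≤ N := Nat.le_floor hyx
  have hyN' : (y : ℝ) ≤ N := by exact_mod_cast hyN
  have hNx : (N : ℝ) ≤ x := Nat.floor_le hx0.le
  have hNx1 : x < N + 1 := Nat.lt_floor_add_one _
  set F : ℝ → ℝ := fun t : ℝ => (⌊x / t⌋₊ : ℝ) / Real.log t with hF
  have hanti : AntitoneOn F (Set.Ici (y : ℝ)) := F_anti hx0 (by linarith)
  have h1 := AntitoneOn.sum_le_integral_Ico hyN (hanti.mono (Set.Icc_subset_Ici_self))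
  have h2 := AntitoneOn.integral_le_sum_Ico hyN (hanti.mono (Set.Icc_subset_Ici_self))
  have hFn : ∀ n : ℕ, F n = ((N / n : ℕ) : ℝ) / Real.log n := by
    intro n; simp only [hF]; rw [Nat.floor_div_natCast]
  have e1 : ∑ i ∈ Finset.Ico y N, F ((i + 1 : ℕ) : ℝ) = ∑ n ∈ Finset.Ioc y N, F n := by
    rw [Finset.sum_Ico_add' (fun n : ℕ => F n) y N 1]
    refine Finset.sum_congr ?_ (fun _ _ => rfl)
    ext n; simp only [Finset.mem_Ico, Finset.mem_Ioc]; omega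
  have e2 : ∑ n ∈ Finset.Ico y N, F n + F N = F y + ∑ n ∈ Finset.Ioc y N, F n := by
    rw [← Finset.sum_Ico_succ_top hyN (fun n : ℕ => F n), Finset.sum_eq_sum_Ico_succ_bot (by omega)]
    congr 1
    refine Finset.sum_congr ?_ (fun _ _ => rfl)
    ext n; simp only [Finset.mem_Ico, Finset.mem_Ioc]; omega
  have hF0 : ∀ t : ℝ, 100 ≤ t → 0 ≤ F t := by
    intro t ht
    have := one_le_log_of (x := t) (by linarith)
    simp only [hF]; positivity
  have hFle : ∀ t : ℝ, 100 ≤ t → F t ≤ x / t := by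
    intro t ht
    have := one_le_log_of (x := t) (by linarith)
    simp only [hF]
    exact (div_le_self (by positivity) this).trans (Nat.floor_le (by positivity))
  have hi : ∀ a b : ℝ, (y : ℝ) ≤ a → a ≤ b → IntervalIntegrable F volume a b := by
    intro a b ha hab
    apply AntitoneOn.intervalIntegrable
    apply hanti.mono
    rw [Set.uIcc_of_le hab]
    intro t ht; exact ha.trans ht.1
  have e3 := intervalIntegral.integral_add_adjacent_intervals (hi y N le_rfl hyN') (hi N x hyN' hNx)
  have h3 : |∫ t in (N : ℝ)..x, F t| ≤ 1 := by
    have := intervalIntegral.norm_integral_le_of_norm_le_const (a := (N : ℝ)) (b := x) (f := F) (C := 1) (by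
      intro t ht
      rw [Set.uIoc_of_le hNx] at ht
      have ht1 : (N : ℝ) < t := ht.1
      rw [Real.norm_of_nonneg (hF0 t (by linarith))]
      have hl := one_le_log_of (x := t) (by linarith)
      have : ⌊x / t⌋₊ < 2 := by
        rw [Nat.floor_lt (by have : 0 < t := by linarith
                             positivity), div_lt_iff₀ (by linarith)]
        push_cast; linarith
      have : (⌊x / t⌋₊ : ℝ) ≤ 1 := by exact_mod_cast (by omega : ⌊x / t⌋₊ ≤ 1)
      simp only [hF]
      rw [div_le_one (by linarith)]; linarith)
    rw [Real.norm_eq_abs, abs_of_nonneg (by linarith : (0 : ℝ) ≤ x - N)] at this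
    linarith
  simp only [← hFn]
  rw [← e3]
  have := hF0 N (by linarith)
  have := hFle y hy'
  rw [abs_le] at h3 ⊢
  constructor <;> linarith [h3.1, h3.2]
end MLPF

namespace MLPF

/-- integrand for the constants -/
noncomputable def fr (j : ℕ) (s : ℝ) : ℝ := Int.fract (1 / s) * (-Real.log s) ^ j

/-- constants -/
noncomputable def cc (j : ℕ) : ℝ := ∫ s in (0:ℝ)..1, fr j s

/-- bound constants -/
noncomputable def DD (j : ℕ) : ℝ := 2 ^ j * j.factorial

lemma DD_pos (j : ℕ) : 0 < DD j := by unfold DD; positivity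

lemma neglog_bound (j : ℕ) {s : ℝ} (h0 : 0 < s) (h1 : s ≤ 1) :
    (-Real.log s) ^ j ≤ DD j * s ^ (-(1 / 2) : ℝ) := by
  have h := log_pow_le_sqrt j (x := s⁻¹) (one_le_inv₀ h0 |>.mpr h1)
  rw [Real.log_inv, Real.sqrt_inv, Real.sqrt_eq_rpow, ← Real.rpow_neg h0.le] at h
  exact h

lemma fr_bound (j : ℕ) {s : ℝ} (h0 : 0 < s) (h1 : s ≤ 1) :
    ‖fr j s‖ ≤ DD j * s ^ (-(1 / 2) : ℝ) := by
  have h2 : 0 ≤ -Real.log s := by have := Real.log_nonpos h0.le h1; linarith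
  rw [fr, Real.norm_of_nonneg (mul_nonneg (Int.fract_nonneg _) (pow_nonneg h2 j))]
  refine le_trans ?_ (neglog_bound j h0 h1)
  exact mul_le_of_le_one_left (pow_nonneg h2 j) (Int.fract_lt_one _).le

lemma pw_int (a b : ℝ) : IntervalIntegrable (fun s : ℝ => s ^ (-(1 / 2) : ℝ)) volume a b :=
  intervalIntegral.intervalIntegrable_rpow' (by norm_num)

lemma fr_int01 (j : ℕ) : IntervalIntegrable (fr j) volume 0 1 := by
  refine ((pw_int 0 1).const_mul (DD j)).mono_fun' ?_ ?_
  · have : Measurable (fr j) := by unfold fr; fun_prop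
    exact this.aestronglyMeasurable
  · refine (ae_restrict_iff' measurableSet_uIoc).mpr (Filter.Eventually.of_forall ?_)
    intro s hs
    rw [Set.uIoc_of_le zero_le_one] at hs
    exact fr_bound j hs.1 hs.2

lemma fr_int (j : ℕ) {a b : ℝ} (h0 : 0 ≤ a) (hab : a ≤ b) (h1 : b ≤ 1) :
    IntervalIntegrable (fr j) volume a b := by
  refine (fr_int01 j).mono_set ?_
  rw [Set.uIcc_of_le hab, Set.uIcc_of_le zero_le_one]
  exact Set.Icc_subset_Icc h0 h1

lemma pw_bound {g : ℝ → ℝ} {D a b : ℝ} (hD : 0 ≤ D) (_h0 : 0 ≤ a) (hab : a ≤ b)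
    (hg : ∀ s, a < s → s ≤ b → ‖g s‖ ≤ D * s ^ (-(1 / 2) : ℝ)) :
    |∫ s in a..b, g s| ≤ 2 * D * √b := by
  have h := intervalIntegral.norm_integral_le_of_norm_le (f := g) (μ := volume)
    (g := fun s => D * s ^ (-(1 / 2) : ℝ)) hab
    (Filter.Eventually.of_forall (fun s hs => hg s hs.1 hs.2)) ((pw_int a b).const_mul D)
  rw [intervalIntegral.integral_const_mul, integral_rpow (Or.inl (by norm_num))] at h
  rw [← Real.norm_eq_abs]
  refine h.trans ?_
  norm_num
  rw [← Real.sqrt_eq_rpow, ← Real.sqrt_eq_rpow]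
  have : 0 ≤ √a := Real.sqrt_nonneg a
  nlinarith

lemma cc_split (j : ℕ) {δ : ℝ} (h0 : 0 ≤ δ) (h1 : δ ≤ 1) :
    |(∫ s in δ..1, fr j s) - cc j| ≤ 2 * DD j * √δ := by
  have h := intervalIntegral.integral_add_adjacent_intervals (fr_int j le_rfl h0 h1) (fr_int j h0 h1 le_rfl)
  rw [cc, ← h, abs_sub_comm, add_sub_cancel_right]
  exact pw_bound (DD_pos j).le le_rfl h0 (fun s hs hs' => fr_bound j hs (hs'.trans h1))

lemma geom_id (J : ℕ) {L v : ℝ} (hL : L ≠ 0) (hv : L - v ≠ 0) :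
    1 / (L - v) = ∑ j ∈ Finset.range J, v ^ j / L ^ (j + 1) + v ^ J / (L ^ J * (L - v)) := by
  induction J with
  | zero => simp
  | succ J ih =>
    rw [Finset.sum_range_succ, ih]
    field_simp
    ring

lemma integral_expand (J : ℕ) {x y : ℝ} (hx : 100 ≤ x) (hy : √x ≤ y) (hyx : y ≤ x) :
    |(∫ t in y..x, (⌊x / t⌋₊ : ℝ) / Real.log t) / x -
      (Real.log (Real.log x / Real.log y) - ∑ j ∈ Finset.range J, cc j / (Real.log x) ^ (j + 1))| ≤
      (2 * ∑ j ∈ Finset.range J, DD j) * √(y / x) + 4 * DD J / (Real.log x) ^ (J + 1) := by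
  set L := Real.log x with hL
  have hx0 : 0 < x := by linarith
  have hL1 : 1 ≤ L := one_le_log_of (by linarith)
  have hs10 : 10 ≤ √x := by rw [Real.le_sqrt' (by norm_num)]; linarith
  have hy0 : 0 < y := by linarith
  have hlogy : L / 2 ≤ Real.log y := by
    rw [hL, ← Real.log_sqrt hx0.le]; exact Real.log_le_log (by linarith) hy
  set δ := y / x with hδ
  have hδ0 : 0 < δ := by positivity
  have hδ1 : δ ≤ 1 := by rw [hδ, div_le_one hx0]; exact hyx
  have hlogδ : L + Real.log δ = Real.log y := by
    rw [hδ, Real.log_div hy0.ne' hx0.ne']; ring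
  have hden : ∀ s, δ ≤ s → L / 2 ≤ L + Real.log s := by
    intro s hs
    have := Real.log_le_log hδ0 hs
    linarith
  have hscale : (∫ t in y..x, (⌊x / t⌋₊ : ℝ) / Real.log t) =
      x * ∫ s in δ..1, (1 / (s * (L + Real.log s)) - fr 0 s * (1 / (L + Real.log s))) := by
    have h := intervalIntegral.integral_comp_div (a := y) (b := x) (c := x)
      (fun s => (1 / (s * (L + Real.log s)) - fr 0 s * (1 / (L + Real.log s)))) hx0.ne'
    rw [div_self hx0.ne', smul_eq_mul] at h
    rw [← h]
    apply intervalIntegral.integral_congr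
    intro t ht
    rw [Set.uIcc_of_le hyx] at ht
    have ht0 : 0 < t := by linarith [ht.1]
    have e1 : L + Real.log (t / x) = Real.log t := by
      rw [Real.log_div ht0.ne' hx0.ne']; ring
    have hlt : 0 < Real.log t := Real.log_pos (by linarith [ht.1])
    simp only
    rw [e1, fr, pow_zero, mul_one, one_div_div, ← Int.self_sub_floor,
      natCast_floor_eq_intCast_floor (by positivity)]
    field_simp
    ring
  have hcont1 : ContinuousOn (fun s : ℝ => 1 / (L + Real.log s)) (Set.uIcc δ 1) := by
    rw [Set.uIcc_of_le hδ1]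
    intro s hs
    have := hden s hs.1
    have hs0 : s ≠ 0 := by linarith [hs.1]
    refine ContinuousAt.continuousWithinAt ?_
    refine continuousAt_const.div (continuousAt_const.add (Real.continuousAt_log hs0)) (by linarith)
  have hcont2 : ContinuousOn (fun s : ℝ => 1 / (s * (L + Real.log s))) (Set.uIcc δ 1) := by
    rw [Set.uIcc_of_le hδ1]
    intro s hs
    have := hden s hs.1
    have hs0 : 0 < s := by linarith [hs.1]
    refine ContinuousAt.continuousWithinAt ?_
    refine continuousAt_const.div (continuousAt_id.mul
      (continuousAt_const.add (Real.continuousAt_log hs0.ne'))) ?_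
    have : 0 < L + Real.log s := by linarith
    positivity
  have hi2 : IntervalIntegrable (fun s : ℝ => 1 / (s * (L + Real.log s))) volume δ 1 :=
    hcont2.intervalIntegrable
  have hi1 : IntervalIntegrable (fun s : ℝ => fr 0 s * (1 / (L + Real.log s))) volume δ 1 :=
    (fr_int 0 hδ0.le hδ1 le_rfl).mul_continuousOn hcont1
  have hI1 : ∫ s in δ..1, 1 / (s * (L + Real.log s)) = Real.log (L / Real.log y) := by
    rw [intervalIntegral.integral_eq_sub_of_hasDerivAt (f := fun s => Real.log (L + Real.log s)) ?_ hi2]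
    · rw [Real.log_one, add_zero, hlogδ, Real.log_div (by linarith) (by linarith)]
    · intro s hs
      rw [Set.uIcc_of_le hδ1] at hs
      have := hden s hs.1
      have hs0 : 0 < s := by linarith [hs.1]
      have h := ((Real.hasDerivAt_log hs0.ne').const_add L).log (by linarith)
      rw [div_eq_mul_inv, ← mul_inv, ← one_div] at h
      exact h
  have hiP : ∀ j ∈ Finset.range J, IntervalIntegrable (fun s => fr j s / L ^ (j + 1)) volume δ 1 :=
    fun j _ => (fr_int j hδ0.le hδ1 le_rfl).div_const _
  have hiPs : IntervalIntegrable (fun s => ∑ j ∈ Finset.range J, fr j s / L ^ (j + 1)) volume δ 1 := by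
    have := IntervalIntegrable.sum (Finset.range J) hiP
    have e : (∑ j ∈ Finset.range J, fun s => fr j s / L ^ (j + 1)) =
      fun s => ∑ j ∈ Finset.range J, fr j s / L ^ (j + 1) := by ext s; simp
    rwa [e] at this
  have hR : |(∫ s in δ..1, fr 0 s * (1 / (L + Real.log s))) -
      ∑ j ∈ Finset.range J, (∫ s in δ..1, fr j s) / L ^ (j + 1)| ≤ 4 * DD J / L ^ (J + 1) := by
    have e : ∑ j ∈ Finset.range J, (∫ s in δ..1, fr j s) / L ^ (j + 1) =
        ∫ s in δ..1, ∑ j ∈ Finset.range J, fr j s / L ^ (j + 1) := by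
      rw [intervalIntegral.integral_finsetSum hiP]
      refine Finset.sum_congr rfl ?_
      intro j _
      rw [intervalIntegral.integral_div]
    rw [e, ← intervalIntegral.integral_sub hi1 hiPs]
    refine (pw_bound (D := 2 * DD J / L ^ (J + 1)) (by have := DD_pos J; positivity) hδ0.le hδ1 ?_).trans
      (le_of_eq (by simp; ring))
    intro s hs1 hs2
    have hs0 : 0 < s := by linarith
    have hd := hden s hs1.le
    have hv : 0 ≤ -Real.log s := by have := Real.log_nonpos hs0.le hs2; linarith
    have e2 : fr 0 s * (1 / (L + Real.log s)) - ∑ j ∈ Finset.range J, fr j s / L ^ (j + 1) =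
        fr J s / (L ^ J * (L + Real.log s)) := by
      have hg := geom_id J (L := L) (v := -Real.log s) (by linarith) (by linarith)
      rw [sub_neg_eq_add] at hg
      rw [hg, mul_add, Finset.mul_sum]
      have : ∀ j, fr 0 s * ((-Real.log s) ^ j / L ^ (j + 1)) = fr j s / L ^ (j + 1) := by
        intro j; simp only [fr, pow_zero]; ring
      simp only [this]
      simp only [fr, pow_zero]; ring
    have hd0 : 0 < L + Real.log s := by linarith
    rw [e2, norm_div, Real.norm_of_nonneg (by positivity : 0 ≤ L ^ J * (L + Real.log s))]
    calc ‖fr J s‖ / (L ^ J * (L + Real.log s))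
        ≤ (DD J * s ^ (-(1 / 2) : ℝ)) / (L ^ J * (L / 2)) := by
          have := fr_bound J hs0 hs2
          have := DD_pos J
          gcongr
      _ = _ := by rw [pow_succ]; field_simp
  rw [hscale, mul_div_cancel_left₀ _ hx0.ne', intervalIntegral.integral_sub hi2 hi1, hI1]
  have hC : |∑ j ∈ Finset.range J, (∫ s in δ..1, fr j s) / L ^ (j + 1) -
      ∑ j ∈ Finset.range J, cc j / L ^ (j + 1)| ≤ (2 * ∑ j ∈ Finset.range J, DD j) * √δ := by
    rw [← Finset.sum_sub_distrib, mul_assoc, Finset.sum_mul, Finset.mul_sum]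
    refine (Finset.abs_sum_le_sum_abs _ _).trans (Finset.sum_le_sum ?_)
    intro j _
    rw [← sub_div, abs_div]
    have h1 : 1 ≤ |L ^ (j + 1)| := by
      rw [abs_of_nonneg (by positivity)]; exact one_le_pow₀ hL1
    have := cc_split j hδ0.le hδ1
    exact (div_le_self (abs_nonneg _) h1).trans (by linarith)
  have hfin := abs_add_le ((∫ s in δ..1, fr 0 s * (1 / (L + Real.log s))) -
      ∑ j ∈ Finset.range J, (∫ s in δ..1, fr j s) / L ^ (j + 1))
      (∑ j ∈ Finset.range J, (∫ s in δ..1, fr j s) / L ^ (j + 1) -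
      ∑ j ∈ Finset.range J, cc j / L ^ (j + 1))
  rw [abs_sub_comm]
  have e3 : ∀ A B S : ℝ, A - S - (A - B) = B - S := by intros; ring
  rw [e3]
  rw [sub_add_sub_cancel] at hfin
  linarith

lemma cc_zero : cc 0 = 1 - Real.eulerMascheroniConstant := by
  have hfin : ∀ n : ℕ, ∫ s in (1 / ((n : ℝ) + 1))..1, fr 0 s = Real.log (n + 1) - (harmonic (n + 1) : ℝ) + 1 := by
    intro n
    induction n with
    | zero => simp
    | succ n ih =>
      have hn : (0 : ℝ) < (n : ℝ) + 1 := by positivity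
      have hle : 1 / ((n : ℝ) + 1 + 1) ≤ 1 / ((n : ℝ) + 1) := by gcongr; linarith
      have hle1 : 1 / ((n : ℝ) + 1) ≤ 1 := by
        rw [div_le_one hn]; have : (0 : ℝ) ≤ n := by positivity
        linarith
      have hp : 0 < 1 / ((n : ℝ) + 1 + 1) := by positivity
      push_cast
      rw [← intervalIntegral.integral_add_adjacent_intervals (fr_int 0 hp.le hle hle1)
        (fr_int 0 (by positivity) hle1 le_rfl), ih]
      have e : ∫ s in (1 / ((n : ℝ) + 1 + 1))..(1 / ((n : ℝ) + 1)), fr 0 s =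
          ∫ s in (1 / ((n : ℝ) + 1 + 1))..(1 / ((n : ℝ) + 1)), (s⁻¹ - ((n : ℝ) + 1)) := by
        apply intervalIntegral.integral_congr_ae
        refine Filter.Eventually.of_forall ?_
        intro s hs
        rw [Set.uIoc_of_le hle] at hs
        have hs0 : 0 < s := hp.trans hs.1
        have h1 : (n : ℝ) + 1 ≤ 1 / s := by
          rw [le_div_iff₀ hs0]
          have := (le_div_iff₀ hn).mp hs.2
          linarith
        have h2 : 1 / s < (n : ℝ) + 1 + 1 := by
          rw [div_lt_iff₀ hs0]
          have := (div_lt_iff₀ (by positivity)).mp hs.1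
          linarith
        have hfl : ⌊1 / s⌋ = (n : ℤ) + 1 := by
          rw [Int.floor_eq_iff]; push_cast; exact ⟨h1, h2⟩
        rw [fr, pow_zero, mul_one, ← Int.self_sub_floor, hfl]
        push_cast; rw [one_div]
      rw [e, intervalIntegral.integral_sub]
      · rw [integral_inv_of_pos hp (by positivity), intervalIntegral.integral_const, smul_eq_mul,
          harmonic_succ (n + 1)]
        rw [show 1 / ((n : ℝ) + 1) / (1 / ((n : ℝ) + 1 + 1)) = ((n : ℝ) + 1 + 1) / ((n : ℝ) + 1) by field_simp,
          Real.log_div (by positivity) (by positivity)]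
        push_cast
        field_simp
        ring
      · apply ContinuousOn.intervalIntegrable
        rw [Set.uIcc_of_le hle]
        intro s hs
        have hs0 : s ≠ 0 := by linarith [hs.1]
        exact (continuousAt_inv₀ hs0).continuousWithinAt
      · exact intervalIntegrable_const
  have h1 : Tendsto (fun n : ℕ => ∫ s in (1 / ((n : ℝ) + 1))..1, fr 0 s) atTop (nhds (cc 0)) := by
    rw [tendsto_iff_norm_sub_tendsto_zero]
    have hlim : Tendsto (fun n : ℕ => 2 * DD 0 * √(1 / ((n : ℝ) + 1))) atTop (nhds 0) := by
      have := (tendsto_one_div_add_atTop_nhds_zero_nat (𝕜 := ℝ)).sqrt.const_mul (2 * DD 0)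
      simpa using this
    refine squeeze_zero (fun n => norm_nonneg _) (fun n => ?_) hlim
    rw [Real.norm_eq_abs]
    have hn : (0 : ℝ) < (n : ℝ) + 1 := by positivity
    refine cc_split 0 (by positivity) ?_
    rw [div_le_one hn]; have : (0 : ℝ) ≤ n := by positivity
    linarith
  have h2 : Tendsto (fun n : ℕ => 1 - ((harmonic (n + 1) : ℝ) - Real.log ((n + 1 : ℕ) : ℝ))) atTop
      (nhds (1 - Real.eulerMascheroniConstant)) :=
    (Real.tendsto_harmonic_sub_log.comp (tendsto_add_atTop_nat 1)).const_sub 1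
  refine tendsto_nhds_unique h1 (h2.congr ?_)
  intro n
  rw [hfin n]; push_cast; ring
end MLPF

namespace MLPF

lemma G_expand (J : ℕ) : ∃ C > 0, ∀ x : ℝ, 10000 ≤ x → ∀ y : ℕ, √x ≤ y → (y : ℝ) ≤ x ^ (3 / 4 : ℝ) →
    |(Gf ⌊x⌋₊ y : ℝ) / x - (Real.log (Real.log x / Real.log y) -
      ∑ j ∈ Finset.range J, cc j / (Real.log x) ^ (j + 1))| ≤ C / (Real.log x) ^ (J + 1) := by
  obtain ⟨C, hC, hb⟩ := G_compare (J + 2)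
  set S : ℝ := ∑ j ∈ Finset.range J, DD j with hS
  have hS0 : 0 ≤ S := Finset.sum_nonneg (fun j _ => (DD_pos j).le)
  set E : ℝ := 8 ^ (J + 1) * (J + 1).factorial with hE
  have hE0 : 0 < E := by positivity
  have hDJ := DD_pos J
  refine ⟨C * 2 ^ (J + 3) + 2 * E + 2 * S * E + 4 * DD J, by positivity, ?_⟩
  intro x hx y hy hyx34
  set L := Real.log x with hL
  set N := ⌊x⌋₊ with hN
  have hx0 : 0 < x := by linarith
  have hL1 : 1 ≤ L := one_le_log_of (by linarith)
  have hs100 : 100 ≤ √x := by rw [Real.le_sqrt' (by norm_num)]; linarith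
  have hsq : √x * √x = x := Real.mul_self_sqrt hx0.le
  have hy100 : 100 ≤ y := by exact_mod_cast hs100.trans hy
  have hy0 : (100 : ℝ) ≤ y := by exact_mod_cast hy100
  have hyx : (y : ℝ) ≤ x := by
    refine hyx34.trans ?_
    calc x ^ (3 / 4 : ℝ) ≤ x ^ (1 : ℝ) := Real.rpow_le_rpow_of_exponent_le (by linarith) (by norm_num)
      _ = x := Real.rpow_one x
  have hN1 : 1 ≤ N := by rw [hN]; apply Nat.le_floor; push_cast; linarith
  have hNx : (N : ℝ) ≤ x := Nat.floor_le hx0.le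
  have hN1' : (1 : ℝ) ≤ N := by exact_mod_cast hN1
  have hlogy : L / 2 ≤ Real.log y := by
    rw [hL, ← Real.log_sqrt hx0.le]; exact Real.log_le_log (by linarith) hy
  have hx8 : L ^ (J + 1) ≤ E * x ^ (1 / 8 : ℝ) := by
    have h := log_pow_le_self (J + 1) (x := x ^ (1 / 8 : ℝ)) (Real.one_le_rpow (by linarith) (by norm_num))
    rw [Real.log_rpow hx0, mul_pow, one_div, inv_pow, inv_mul_le_iff₀ (by positivity)] at h
    rw [one_div]; linarith
  have h1 : |(Gf N y : ℝ) / x - (∑ n ∈ Finset.Ioc y N, ((N / n : ℕ) : ℝ) / Real.log n) / x| ≤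
      C * 2 ^ (J + 3) / L ^ (J + 1) := by
    rw [← sub_div, abs_div, abs_of_pos hx0, div_le_iff₀ hx0]
    refine (hb N y hy100 hN1).trans ?_
    have hlN : Real.log N ≤ L := Real.log_le_log (by linarith) hNx
    have hlN0 : 0 ≤ Real.log N := Real.log_nonneg hN1'
    calc C * N * (1 + Real.log N) / (Real.log y) ^ (J + 2)
        ≤ C * x * (2 * L) / (L / 2) ^ (J + 2) := by
          gcongr
          linarith
      _ = _ := by
          rw [div_pow, pow_succ L (J + 1), pow_succ 2 (J + 2)]; field_simp
  have hxs : x ^ (-(1 / 8) : ℝ) ≤ E / L ^ (J + 1) := by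
    rw [Real.rpow_neg hx0.le, le_div_iff₀ (by positivity), inv_mul_le_iff₀ (by positivity)]
    linarith
  have hs8 : 1 / √x ≤ x ^ (-(1 / 8) : ℝ) := by
    rw [one_div, Real.sqrt_eq_rpow, ← Real.rpow_neg hx0.le]
    exact Real.rpow_le_rpow_of_exponent_le (by linarith) (by norm_num)
  have h2 : |(∑ n ∈ Finset.Ioc y N, ((N / n : ℕ) : ℝ) / Real.log n) / x -
      (∫ t in (y : ℝ)..x, (⌊x / t⌋₊ : ℝ) / Real.log t) / x| ≤ 2 * E / L ^ (J + 1) := by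
    rw [← sub_div, abs_div, abs_of_pos hx0, div_le_iff₀ hx0]
    refine (sum_integral hy100 hyx).trans ?_
    have g1 : x / y ≤ √x := by
      rw [div_le_iff₀ (by linarith)]; nlinarith
    have g2 : √x ≤ x * (E / L ^ (J + 1)) := by
      have : √x = x * (1 / √x) := by
        rw [mul_one_div, eq_div_iff (by linarith)]; exact hsq
      rw [this]
      exact mul_le_mul_of_nonneg_left (hs8.trans hxs) hx0.le
    have : 2 * E / L ^ (J + 1) * x = 2 * (x * (E / L ^ (J + 1))) := by ring
    rw [this]; linarith
  have h3 := integral_expand J (x := x) (y := y) (by linarith) hy hyx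
  have hδ : √((y : ℝ) / x) ≤ E / L ^ (J + 1) := by
    refine le_trans ?_ hxs
    rw [Real.sqrt_le_left (by positivity), ← Real.rpow_natCast, ← Real.rpow_mul hx0.le, div_le_iff₀ hx0]
    refine hyx34.trans (le_of_eq ?_)
    nth_rewrite 3 [← Real.rpow_one x]
    rw [← Real.rpow_add hx0]; norm_num
  have h3' : (2 * S) * √((y : ℝ) / x) ≤ 2 * S * E / L ^ (J + 1) := by
    rw [mul_div_assoc]
    exact mul_le_mul_of_nonneg_left hδ (by positivity)
  have t1 := abs_sub_le ((Gf N y : ℝ) / x) ((∑ n ∈ Finset.Ioc y N, ((N / n : ℕ) : ℝ) / Real.log n) / x)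
    (Real.log (L / Real.log y) - ∑ j ∈ Finset.range J, cc j / L ^ (j + 1))
  have t2 := abs_sub_le ((∑ n ∈ Finset.Ioc y N, ((N / n : ℕ) : ℝ) / Real.log n) / x)
    ((∫ t in (y : ℝ)..x, (⌊x / t⌋₊ : ℝ) / Real.log t) / x)
    (Real.log (L / Real.log y) - ∑ j ∈ Finset.range J, cc j / L ^ (j + 1))
  have e : (C * 2 ^ (J + 3) + 2 * E + 2 * S * E + 4 * DD J) / L ^ (J + 1) =
    C * 2 ^ (J + 3) / L ^ (J + 1) + 2 * E / L ^ (J + 1) + 2 * S * E / L ^ (J + 1) + 4 * DD J / L ^ (J + 1) := by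
    ring
  rw [e]
  linarith

lemma rpow_add_one_le {a b : ℝ} (ha : 0 < a) (hab : a < b) : ∀ᶠ x : ℝ in atTop, x ^ a + 1 ≤ x ^ b := by
  filter_upwards [(tendsto_rpow_atTop (sub_pos.mpr hab)).eventually_ge_atTop 2, eventually_ge_atTop (1 : ℝ)] with x h1 h2
  have h3 : 1 ≤ x ^ a := Real.one_le_rpow h2 ha.le
  have h4 : x ^ b = x ^ a * x ^ (b - a) := by rw [← Real.rpow_add (by linarith)]; ring_nf
  rw [h4]; nlinarith

lemma median_loc : ∀ᶠ x : ℝ in atTop, √x ≤ medianLPF x ∧ (medianLPF x : ℝ) ≤ x ^ (3 / 4 : ℝ) ∧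
    |(Gf ⌊x⌋₊ (medianLPF x) : ℝ) / x - 1 / 2| ≤ 2 / √x := by
  obtain ⟨C, hC, hb⟩ := G_expand 0
  simp only [Finset.range_zero, Finset.sum_empty, sub_zero, zero_add, pow_one] at hb
  have he1 := Real.exp_one_lt_d9
  have he2 := Real.exp_one_gt_d9
  have hε1 : 1 / 2 < Real.log (9 / 5) := by
    have : (1 : ℝ) < Real.log ((9 / 5) ^ 2) := by
      rw [Real.lt_log_iff_exp_lt (by norm_num)]; norm_num at he1 ⊢; linarith
    rw [Real.log_pow] at this; push_cast at this; linarith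
  have hε2 : Real.log (3 / 2) < 1 / 2 := by
    have : Real.log ((3 / 2) ^ 2) < 1 := by
      rw [Real.log_lt_iff_lt_exp (by norm_num)]; norm_num at he2 ⊢; linarith
    rw [Real.log_pow] at this; push_cast at this; linarith
  have hlim : Tendsto (fun x : ℝ => C / Real.log x) atTop (nhds 0) :=
    tendsto_const_nhds.div_atTop Real.tendsto_log_atTop
  have hlim2 : Tendsto (fun x : ℝ => C / Real.log x + 1 / x) atTop (nhds 0) := by
    have := hlim.add (tendsto_const_nhds.div_atTop tendsto_id : Tendsto (fun x : ℝ => 1 / x) atTop (nhds 0))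
    simpa using this
  filter_upwards [eventually_ge_atTop (10000 : ℝ), rpow_add_one_le (a := 1 / 2) (b := 5 / 9) (by norm_num) (by norm_num),
    rpow_add_one_le (a := 2 / 3) (b := 3 / 4) (by norm_num) (by norm_num),
    hlim.eventually_lt_const (sub_pos.mpr hε1), hlim2.eventually_lt_const (sub_pos.mpr hε2)] with x hx h1 h2 h3 h4
  set L := Real.log x with hL
  set N := ⌊x⌋₊ with hN
  set M := medianLPF x with hM
  have hx0 : 0 < x := by linarith
  have hL1 : 1 ≤ L := one_le_log_of (by linarith)
  have hs100 : 100 ≤ √x := by rw [Real.le_sqrt' (by norm_num)]; linarith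
  have hsq : √x * √x = x := Real.mul_self_sqrt hx0.le
  have hN1 : 1 ≤ N := by rw [hN]; apply Nat.le_floor; push_cast; linarith
  have hNx : (N : ℝ) ≤ x := Nat.floor_le hx0.le
  have hNx1 : x < N + 1 := Nat.lt_floor_add_one _
  have hiff : ∀ y, M ≤ y ↔ (N + 1) / 2 ≤ cntLe N y := median_le_iff hN1
  have hsqN : ∀ y : ℕ, √x ≤ y → N < (y + 1) ^ 2 := by
    intro y hy
    have : (N : ℝ) < ((y : ℝ) + 1) ^ 2 := by nlinarith
    exact_mod_cast this
  rw [← Real.sqrt_eq_rpow] at h1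
  have h59 : x ^ (5 / 9 : ℝ) ≤ x ^ (3 / 4 : ℝ) := Real.rpow_le_rpow_of_exponent_le (by linarith) (by norm_num)
  have h23 : √x ≤ x ^ (2 / 3 : ℝ) := by
    rw [Real.sqrt_eq_rpow]; exact Real.rpow_le_rpow_of_exponent_le (by linarith) (by norm_num)
  -- lower location
  have hlow : √x < M := by
    set y := ⌈√x⌉₊ with hy
    have hy1 : √x ≤ y := Nat.le_ceil _
    have hy2 : (y : ℝ) < √x + 1 := Nat.ceil_lt_add_one (by positivity)
    have hy100 : 100 ≤ y := by exact_mod_cast hs100.trans hy1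
    by_contra hcon
    have hMy : M ≤ y := by
      have : (M : ℝ) ≤ y := by linarith
      exact_mod_cast this
    have hc := (hiff y).mp hMy
    have hcG := cnt_add_G (N := N) (y := y) (by omega) (hsqN y hy1)
    have hG : (Gf N y : ℝ) ≤ x / 2 := by
      have : 2 * Gf N y ≤ N := by omega
      have : 2 * (Gf N y : ℝ) ≤ N := by exact_mod_cast this
      linarith
    have hg := hb x hx y hy1 (by linarith)
    have hly0 : 0 < Real.log y := Real.log_pos (by linarith)
    have hly : Real.log y ≤ 5 / 9 * L := by
      rw [hL, ← Real.log_rpow hx0]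
      exact Real.log_le_log (by linarith) (by linarith)
    have : Real.log (9 / 5) ≤ Real.log (L / Real.log y) := by
      apply Real.log_le_log (by norm_num)
      rw [le_div_iff₀ hly0]; linarith
    have h5 : (Gf N y : ℝ) / x ≤ 1 / 2 := by rw [div_le_iff₀ hx0]; linarith
    have := (abs_le.mp hg).1
    linarith
  have hup : (M : ℝ) ≤ x ^ (3 / 4 : ℝ) := by
    set y := ⌊x ^ (3 / 4 : ℝ)⌋₊ with hy
    have hy1 : (y : ℝ) ≤ x ^ (3 / 4 : ℝ) := Nat.floor_le (by positivity)
    have hy2 : x ^ (3 / 4 : ℝ) < (y : ℝ) + 1 := Nat.lt_floor_add_one _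
    have hy3 : √x ≤ y := by linarith
    have hy100 : 100 ≤ y := by exact_mod_cast hs100.trans hy3
    refine le_trans ?_ hy1
    suffices M ≤ y by exact_mod_cast this
    rw [hiff]
    have hcG := cnt_add_G (N := N) (y := y) (by omega) (hsqN y hy3)
    have hg := hb x hx y hy3 hy1
    have hly : 2 / 3 * L ≤ Real.log y := by
      rw [hL, ← Real.log_rpow hx0]
      exact Real.log_le_log (by positivity) (by linarith)
    have h6 : Real.log (L / Real.log y) ≤ Real.log (3 / 2) := by
      have : 0 < Real.log y := by linarith
      apply Real.log_le_log (by positivity)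
      rw [div_le_iff₀ (by linarith)]; linarith
    have h7 := (abs_le.mp hg).2
    have h8 : (Gf N y : ℝ) / x + 1 / x < 1 / 2 := by linarith
    rw [← add_div, div_lt_iff₀ hx0] at h8
    have h9 : 2 * (Gf N y : ℝ) + 1 < N := by linarith
    have : 2 * Gf N y + 1 < N := by exact_mod_cast h9
    omega
  refine ⟨hlow.le, hup, ?_⟩
  have hM1 : 1 ≤ M := by
    have : (1 : ℝ) ≤ M := by linarith
    exact_mod_cast this
  have hM2 : 2 ≤ M := by
    have : (2 : ℝ) ≤ M := by linarith
    exact_mod_cast this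
  have hcG := cnt_add_G (N := N) (y := M) hM1 (hsqN M hlow.le)
  have hc := (hiff M).mp le_rfl
  have hG1 : (Gf N M : ℝ) ≤ x / 2 := by
    have : 2 * Gf N M ≤ N := by omega
    have : 2 * (Gf N M : ℝ) ≤ N := by exact_mod_cast this
    linarith
  have hcG2 := cnt_add_G (N := N) (y := M - 1) (by omega) (by
    rw [Nat.sub_add_cancel hM1]
    have : (N : ℝ) < (M : ℝ) ^ 2 := by nlinarith
    exact_mod_cast this)
  have hc2 : ¬ (N + 1) / 2 ≤ cntLe N (M - 1) := by
    rw [← hiff (M - 1)]; omega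
  have hp := G_pred (N := N) hM1
  have hG2 : (N : ℝ) ≤ 2 * (Gf N M + (N / M : ℕ)) := by
    have : N ≤ 2 * (Gf N M + N / M) := by omega
    exact_mod_cast this
  have hNM : ((N / M : ℕ) : ℝ) ≤ √x := by
    refine (Nat.cast_div_le).trans ?_
    rw [div_le_iff₀ (by linarith)]; nlinarith
  have e : (Gf N M : ℝ) / x - 1 / 2 = (Gf N M - x / 2) / x := by field_simp
  rw [e, abs_div, abs_of_pos hx0, div_le_div_iff₀ hx0 (by linarith)]
  have : |(Gf N M : ℝ) - x / 2| ≤ 2 * √x := by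
    rw [abs_le]; constructor <;> linarith
  nlinarith

lemma main_rel (J : ℕ) : ∃ C > 0, ∀ᶠ x : ℝ in atTop, √x ≤ medianLPF x ∧
    |Real.log (Real.log x / Real.log (medianLPF x)) - 1 / 2 -
      ∑ j ∈ Finset.range J, cc j / (Real.log x) ^ (j + 1)| ≤ C / (Real.log x) ^ (J + 1) := by
  obtain ⟨C, hC, hb⟩ := G_expand J
  have hD := DD_pos (J + 1)
  refine ⟨C + 2 * DD (J + 1), by positivity, ?_⟩
  filter_upwards [eventually_ge_atTop (10000 : ℝ), median_loc] with x hx ⟨h1, h2, h3⟩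
  refine ⟨h1, ?_⟩
  have h4 := hb x hx _ h1 h2
  have hx0 : 0 < x := by linarith
  have hL1 : 1 ≤ Real.log x := one_le_log_of (by linarith)
  have h5 : 2 / √x ≤ 2 * DD (J + 1) / (Real.log x) ^ (J + 1) := by
    have := log_pow_le_sqrt (J + 1) (x := x) (by linarith)
    change _ ≤ DD (J + 1) * √x at this
    rw [div_le_div_iff₀ (by positivity) (by positivity)]
    linarith
  rw [add_div]
  rw [abs_le] at h3 h4 ⊢
  constructor <;> linarith [h3.1, h3.2, h4.1, h4.2]
end MLPF

theorem median_largest_prime_factor_expansion :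
    ∀ n : ℕ, 1 ≤ n → ∃ d : ℕ → ℝ, ∃ C > (0:ℝ), ∀ᶠ x : ℝ in atTop,
      |(medianLPF x : ℝ) /
          (Real.exp ((Real.eulerMascheroniConstant - 1) / Real.sqrt (Real.exp 1)) *
            x ^ (1 / Real.sqrt (Real.exp 1))) -
          (1 + ∑ i ∈ Finset.Icc 1 n, d i / (Real.log x) ^ i)| ≤
        C / (Real.log x) ^ (n + 1) := by
  intro n _
  obtain ⟨C, hC, hmain⟩ := MLPF.main_rel (n + 1)
  set α : ℝ := 1 / Real.sqrt (Real.exp 1) with hα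
  have hα' : α = Real.exp (-(1 / 2)) := by
    rw [hα, Real.exp_neg, Real.sqrt_eq_rpow, ← Real.exp_mul, one_div]; norm_num
  have hα0 : 0 < α := by rw [hα']; positivity
  have hα1 : α ≤ 1 := by rw [hα']; exact Real.exp_le_one_iff.mpr (by norm_num)
  set Q : ℝ → ℝ := fun u => ∑ j ∈ Finset.range (n + 1), MLPF.cc j * u ^ (j + 1) with hQ
  set E : ℝ → ℝ := fun u => Real.exp (-Q u) with hE
  set H : ℝ → ℝ := fun u => Real.exp (α * dslope E 0 u) with hH
  have hQan : AnalyticAt ℝ Q 0 := by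
    rw [hQ]
    refine Finset.analyticAt_fun_sum _ ?_
    intro j _
    fun_prop
  have hEan : AnalyticAt ℝ E 0 := hQan.neg.rexp
  have hdan : AnalyticAt ℝ (dslope E 0) 0 := by
    obtain ⟨q, hq⟩ := hEan
    exact ⟨_, hq.has_fpower_series_dslope_fslope⟩
  have hHan : AnalyticAt ℝ H 0 := (analyticAt_const.mul hdan).rexp
  have hQ0 : Q 0 = 0 := by simp [hQ]
  have hE0 : E 0 = 1 := by simp [hE, hQ0]
  have hQd : HasDerivAt Q (MLPF.cc 0) 0 := by
    have h : HasDerivAt Q (∑ j ∈ Finset.range (n + 1), MLPF.cc j * (((j + 1 : ℕ) : ℝ) * (0 : ℝ) ^ j)) 0 := by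
      rw [hQ]
      refine HasDerivAt.fun_sum ?_
      intro j _
      exact (hasDerivAt_pow (j + 1) (0 : ℝ)).const_mul (MLPF.cc j)
    rw [Finset.sum_range_succ'] at h
    simpa using h
  have hEd : deriv E 0 = -MLPF.cc 0 := by
    have := hQd.neg.exp.deriv
    simp only [Pi.neg_apply, hQ0, neg_zero, Real.exp_zero, one_mul] at this
    exact this
  have hH0 : H 0 = Real.exp ((Real.eulerMascheroniConstant - 1) / Real.sqrt (Real.exp 1)) := by
    simp only [hH]
    rw [dslope_same, hEd, MLPF.cc_zero, hα]
    congr 1; ring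
  rw [← hH0]
  have hH0p : 0 < H 0 := Real.exp_pos _
  obtain ⟨p, hp⟩ := hHan
  obtain ⟨K, hK⟩ := (hp.isBigO_sub_partialSum_pow (n + 1)).bound
  have hulim : Tendsto (fun x : ℝ => 1 / Real.log x) atTop (nhds 0) :=
    tendsto_const_nhds.div_atTop Real.tendsto_log_atTop
  have hEc : ∀ᶠ u in nhds (0 : ℝ), E u < 2 :=
    hEan.continuousAt.eventually_lt_const (by rw [hE0]; norm_num)
  have hHc : ∀ᶠ u in nhds (0 : ℝ), H u < H 0 + 1 :=
    hp.continuousAt.eventually_lt_const (by linarith)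
  have hsm1 : ∀ᶠ x : ℝ in atTop, 4 * C / (Real.log x) ^ (n + 1) < 1 :=
    (tendsto_const_nhds.div_atTop
      ((tendsto_pow_atTop (Nat.succ_ne_zero n)).comp Real.tendsto_log_atTop)).eventually_lt_const one_pos
  have hc0 : p.coeff 0 = H 0 := hp.coeff_zero _
  refine ⟨fun i => p.coeff i / H 0, ((H 0 + 1) * (8 * C) + |K|) / H 0, by positivity, ?_⟩
  filter_upwards [eventually_ge_atTop (10000 : ℝ), hmain, hulim.eventually hK, hulim.eventually hEc,
    hulim.eventually hHc, hsm1] with x hx ⟨hM, hr⟩ hKx hEx hHx hs1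
  set L := Real.log x with hL
  set u := 1 / L with hu
  have hx0 : 0 < x := by linarith
  have hL1 : 1 ≤ L := MLPF.one_le_log_of (by linarith)
  have hL0 : 0 < L := by linarith
  have hs100 : 100 ≤ √x := by rw [Real.le_sqrt' (by norm_num)]; linarith
  set M : ℝ := (medianLPF x : ℝ) with hMdef
  have hM0 : 0 < M := by linarith
  have hlM : 0 < Real.log M := Real.log_pos (by linarith)
  have hQu : ∑ j ∈ Finset.range (n + 1), MLPF.cc j / L ^ (j + 1) = Q u := by
    simp only [hQ, hu]
    refine Finset.sum_congr rfl ?_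
    intro j _
    rw [one_div, inv_pow, div_eq_mul_inv]
  rw [hQu] at hr
  set r := Real.log (L / Real.log M) - 1 / 2 - Q u with hrdef
  have hlogM : Real.log M = α * L * E u * Real.exp (-r) := by
    have h1 : L / Real.log M = Real.exp (r + 1 / 2 + Q u) := by
      rw [show r + 1 / 2 + Q u = Real.log (L / Real.log M) by rw [hrdef]; ring,
        Real.exp_log (by positivity)]
    have h2 : Real.log M = L * Real.exp (-(r + 1 / 2 + Q u)) := by
      rw [Real.exp_neg, ← h1]; field_simp
    rw [h2, hα']
    simp only [hE]
    rw [mul_comm _ L, mul_assoc, mul_assoc, ← Real.exp_add, ← Real.exp_add]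
    congr 2; ring
  have hr1 : |r| ≤ C / L ^ (n + 2) := hr
  have hrr : L * |r| ≤ C / L ^ (n + 1) := by
    calc L * |r| ≤ L * (C / L ^ (n + 2)) := by gcongr
      _ = _ := by rw [pow_succ L (n + 1)]; field_simp
  have hrr0 : |r| ≤ L * |r| := le_mul_of_one_le_left (abs_nonneg _) hL1
  have h4C : 4 * C / L ^ (n + 1) = 4 * (C / L ^ (n + 1)) := by ring
  have hCp : 0 < C / L ^ (n + 1) := by positivity
  have hEpos : 0 < E u := Real.exp_pos _
  set ρ := α * L * E u * (Real.exp (-r) - 1) with hρ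
  have hρb : |ρ| ≤ 4 * C / L ^ (n + 1) := by
    have h1 : |Real.exp (-r) - 1| ≤ 2 * |r| := by
      have := Real.abs_exp_sub_one_le (x := -r) (by rw [abs_neg]; linarith)
      rwa [abs_neg] at this
    rw [hρ, abs_mul, abs_of_pos (by positivity)]
    calc α * L * E u * |Real.exp (-r) - 1| ≤ 1 * L * 2 * (2 * |r|) := by gcongr
      _ = 4 * (L * |r|) := by ring
      _ ≤ _ := by rw [h4C]; linarith
  have hρe : |Real.exp ρ - 1| ≤ 8 * C / L ^ (n + 1) := by
    have := Real.abs_exp_sub_one_le (x := ρ) (by linarith)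
    have e : 8 * C / L ^ (n + 1) = 2 * (4 * C / L ^ (n + 1)) := by ring
    rw [e]; linarith
  have hu0 : u ≠ 0 := by positivity
  have hMx : M / x ^ α = H u * Real.exp ρ := by
    have h1 : x ^ α = Real.exp (L * α) := by rw [hL, Real.rpow_def_of_pos hx0]
    have h2 : α * dslope E 0 u = α * L * (E u - 1) := by
      rw [dslope_of_ne _ hu0, slope_def_field, hE0, hu]; field_simp; ring
    simp only [hH]
    rw [h2, h1, ← Real.exp_add]
    nth_rewrite 1 [← Real.exp_log hM0]
    rw [← Real.exp_sub, hlogM, hρ]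
    congr 1; ring
  have hps : p.partialSum (n + 1) u = H 0 * (1 + ∑ i ∈ Finset.Icc 1 n, p.coeff i / H 0 / L ^ i) := by
    rw [FormalMultilinearSeries.partialSum]
    simp only [FormalMultilinearSeries.apply_eq_pow_smul_coeff, smul_eq_mul]
    rw [Finset.range_eq_Ico, Finset.sum_eq_sum_Ico_succ_bot (by omega), hc0, mul_add, Finset.mul_sum]
    congr 1
    · simp
    · refine Finset.sum_congr ?_ ?_
      · ext i; simp only [Finset.mem_Ico, Finset.mem_Icc]; omega
      · intro i _
        rw [hu, one_div, inv_pow]; field_simp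
  have hKx' : |H u - H 0 * (1 + ∑ i ∈ Finset.Icc 1 n, p.coeff i / H 0 / L ^ i)| ≤ |K| / L ^ (n + 1) := by
    rw [← hps]
    have h1 := hKx
    rw [zero_add, Real.norm_eq_abs] at h1
    refine h1.trans ?_
    have h2 : ‖‖u‖ ^ (n + 1)‖ = 1 / L ^ (n + 1) := by
      rw [norm_pow, norm_norm, Real.norm_of_nonneg (by positivity), hu, div_pow, one_pow]
    rw [h2, mul_one_div]
    gcongr
    exact le_abs_self K
  have hfinal : M / (H 0 * x ^ α) - (1 + ∑ i ∈ Finset.Icc 1 n, p.coeff i / H 0 / L ^ i) =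
      (H u * (Real.exp ρ - 1) + (H u - H 0 * (1 + ∑ i ∈ Finset.Icc 1 n, p.coeff i / H 0 / L ^ i))) / H 0 := by
    have e1 : M / (H 0 * x ^ α) = H u * Real.exp ρ / H 0 := by
      rw [← hMx]; field_simp
    rw [e1]
    generalize ∑ i ∈ Finset.Icc 1 n, p.coeff i / H 0 / L ^ i = S
    field_simp
    ring
  change |M / (H 0 * x ^ α) - (1 + ∑ i ∈ Finset.Icc 1 n, p.coeff i / H 0 / L ^ i)| ≤ _
  rw [hfinal, abs_div, abs_of_pos hH0p, div_right_comm]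
  gcongr
  refine (abs_add_le _ _).trans ?_
  rw [add_div]
  refine add_le_add ?_ hKx'
  have hHpos : 0 < H u := Real.exp_pos _
  rw [abs_mul, abs_of_pos hHpos, mul_div_assoc]
  gcongr
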